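/- arXiv:1903.07494 — 2 statements merged into one kernel-verified Lean document; each statement's English description precedes it below -/
import Mathlib

section
/- Let μ be a normalized n×n matrix measure on the unit circle 𝕋 (so μ(𝕋) = 1ₙ), let (supp μ)' denote the set of limit points of the support of μ, and let f be the Schur function of μ. Then 𝕋 \ (supp μ)' is exactly the union of the open arcs Γ ⊂ 𝕋 through which f has an analytic continuation taking unitary values on Γ; that is, an open arc Γ ⊂ 𝕋 is disjoint from (supp μ)' if and only if f extends analytically to a neighbourhood of Γ in ℂ and the extension is a unitary matrix at every point of Γ. -/
open Complex Filter Set Metric MeasureTheory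
open scoped ComplexOrder

/-- An `n × n` matrix measure on the unit circle `𝕋 ⊆ ℂ`: a countably additive
assignment of positive semidefinite matrices to Borel sets, represented by a finite
base measure concentrated on the circle together with a positive semidefinite
matrix-valued density (such a representation always exists, e.g. with respect to
the trace measure). -/
structure MatrixMeasure (n : ℕ) where
  base : Measure ℂ
  finite : IsFiniteMeasure base
  circleSupp : base (Metric.sphere (0:ℂ) 1)ᶜ = 0
  dens : ℂ → Matrix (Fin n) (Fin n) ℂ
  dens_meas : ∀ i j, Measurable fun t => dens t i j
  dens_int : ∀ i j, Integrable (fun t => dens t i j) base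
  dens_psd : ∀ᵐ t ∂base, (dens t).PosSemidef

namespace MatrixMeasure

variable {n : ℕ} (μ : MatrixMeasure n)

/-- The value of the matrix measure on a set. -/
noncomputable def meas (A : Set ℂ) : Matrix (Fin n) (Fin n) ℂ :=
  Matrix.of fun i j => ∫ t in A, μ.dens t i j ∂μ.base

/-- The support of the matrix measure: the points all of whose neighbourhoods have
nonzero measure (equivalently, the smallest closed set of full measure). -/
def supp : Set ℂ := {x : ℂ | ∀ ε > 0, μ.meas (Metric.ball x ε) ≠ 0}

/-- The set of limit points of the support. -/
def limitPts : Set ℂ := {x : ℂ | x ∈ closure (μ.supp \ {x})}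

/-- The Carathéodory function `F(z) = ∫ (t+z)/(t-z) dμ(t)` of the matrix measure. -/
noncomputable def cara (z : ℂ) : Matrix (Fin n) (Fin n) ℂ :=
  Matrix.of fun i j => ∫ t, ((t + z) / (t - z)) * μ.dens t i j ∂μ.base

/-- The Schur function `f(z) = z⁻¹ (F(z) - 1)(F(z) + 1)⁻¹` of the matrix measure. -/
noncomputable def schur (z : ℂ) : Matrix (Fin n) (Fin n) ℂ :=
  z⁻¹ • ((μ.cara z - 1) * (μ.cara z + 1)⁻¹)

end MatrixMeasure

/-- An open arc of the unit circle. -/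
def IsOpenArc (Γ : Set ℂ) : Prop :=
  ∃ a b : ℝ, a < b ∧ b - a < 2 * Real.pi ∧
    Γ = (fun θ : ℝ => Complex.exp (θ * Complex.I)) '' Set.Ioo a b

/-! Matrix lemmas -/

lemma aux_det_ne {n : ℕ} (A : Matrix (Fin n) (Fin n) ℂ)
    (h : ∀ v : Fin n → ℂ, 0 ≤ (star v ⬝ᵥ A.mulVec v).re) : (A + 1).det ≠ 0 := by
  intro h0
  obtain ⟨v, hv, hAv⟩ := Matrix.exists_mulVec_eq_zero_iff.2 h0
  rw [Matrix.add_mulVec, Matrix.one_mulVec] at hAv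
  have h1 : A.mulVec v = -v := eq_neg_of_add_eq_zero_left hAv
  have h2 := h v
  rw [h1, dotProduct_neg, Complex.neg_re] at h2
  have h3 : 0 < star v ⬝ᵥ v := Matrix.dotProduct_star_self_pos_iff.2 hv
  have h4 := (Complex.lt_def.1 h3).1
  simp at h4 h2
  linarith

lemma aux_skew_re {n : ℕ} (A : Matrix (Fin n) (Fin n) ℂ) (hA : A.conjTranspose = -A)
    (v : Fin n → ℂ) : (star v ⬝ᵥ A.mulVec v).re = 0 := by
  have h1 : star (star v ⬝ᵥ A.mulVec v) = -(star v ⬝ᵥ A.mulVec v) := by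
    rw [← Matrix.star_dotProduct (A.mulVec v) v, Matrix.star_mulVec, hA, Matrix.vecMul_neg, 
      neg_dotProduct, ← Matrix.dotProduct_mulVec]
  have h2 := congrArg Complex.re h1
  simp only [Complex.star_def, Complex.conj_re, Complex.neg_re] at h2
  linarith

lemma aux_cayley_unitary {n : ℕ} (A : Matrix (Fin n) (Fin n) ℂ) (hA : A.conjTranspose = -A)
    (z : ℂ) (hz : ‖z‖ = 1) :
    z⁻¹ • ((A - 1) * (A + 1)⁻¹) ∈ Matrix.unitaryGroup (Fin n) ℂ := by
  have hu : IsUnit (A + 1).det :=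
    isUnit_iff_ne_zero.2 (aux_det_ne A fun v => (aux_skew_re A hA v).ge)
  have hu2 : IsUnit (1 - A).det := by
    have : (A + 1).conjTranspose = 1 - A := by
      rw [Matrix.conjTranspose_add, hA, Matrix.conjTranspose_one]; abel
    rw [← this, Matrix.det_conjTranspose]
    exact hu.star
  rw [Matrix.mem_unitaryGroup_iff']
  have hz1 : star z⁻¹ * z⁻¹ = 1 := by
    rw [Complex.star_def, ← Complex.normSq_eq_conj_mul_self, Complex.normSq_eq_norm_sq]
    simp [hz]
  rw [Matrix.star_eq_conjTranspose, Matrix.conjTranspose_smul, Matrix.conjTranspose_mul,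
    Matrix.conjTranspose_nonsing_inv, Matrix.conjTranspose_sub, Matrix.conjTranspose_add, hA,
    Matrix.conjTranspose_one, Matrix.smul_mul, Matrix.mul_smul, smul_smul, hz1, one_smul]
  have e1 : (-A + 1) = 1 - A := by abel
  have e2 : (-A - 1) = -(A + 1) := by abel
  have e3 : A - 1 = -(1 - A) := by abel
  rw [e1, e2, e3]
  have comm : (A + 1) * (1 - A) = (1 - A) * (A + 1) := by noncomm_ring
  calc (1 - A)⁻¹ * -(A + 1) * (-(1 - A) * (A + 1)⁻¹)
      = (1 - A)⁻¹ * ((A + 1) * (1 - A)) * (A + 1)⁻¹ := by noncomm_ring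
    _ = 1 := by
      rw [comm, ← Matrix.mul_assoc, Matrix.nonsing_inv_mul _ hu2, Matrix.one_mul,
        Matrix.mul_nonsing_inv _ hu]

lemma aux_cayley_skew {n : ℕ} (W : Matrix (Fin n) (Fin n) ℂ)
    (hW : W ∈ Matrix.unitaryGroup (Fin n) ℂ) (hd : (1 - W).det ≠ 0) :
    (((1 + W) * (1 - W)⁻¹).trace).re = 0 := by
  have hu : IsUnit (1 - W).det := isUnit_iff_ne_zero.2 hd
  set G := (1 + W) * (1 - W)⁻¹ with hG
  have hu2 : IsUnit (1 - W).conjTranspose.det := by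
    rw [Matrix.det_conjTranspose]; exact hu.star
  have hWW : W.conjTranspose * W = 1 := Matrix.mem_unitaryGroup_iff'.1 hW
  have h1 : G * (1 - W) = 1 + W := by
    rw [hG, Matrix.mul_assoc, Matrix.nonsing_inv_mul _ hu, Matrix.mul_one]
  have h2 : (1 - W).conjTranspose * G.conjTranspose = 1 + W.conjTranspose := by
    rw [← Matrix.conjTranspose_mul, h1]; simp
  have h3 : (1 - W).conjTranspose * (G.conjTranspose + G) * (1 - W) = 0 := by
    rw [Matrix.mul_add, h2, Matrix.add_mul, Matrix.mul_assoc _ G, h1, Matrix.conjTranspose_sub,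
      Matrix.conjTranspose_one]
    have : (1 + W.conjTranspose) * (1 - W) + (1 - W.conjTranspose) * (1 + W)
      = 2 • (1 - W.conjTranspose * W) := by noncomm_ring
    rw [this, hWW]; simp
  have h4 : G.conjTranspose + G = 0 := by
    have : (1 - W).conjTranspose⁻¹ * ((1 - W).conjTranspose * (G.conjTranspose + G) * (1 - W)) 
        * (1 - W)⁻¹ = G.conjTranspose + G := by
      rw [Matrix.mul_assoc _ _ (1 - W), ← Matrix.mul_assoc, Matrix.nonsing_inv_mul _ hu2,
        Matrix.one_mul, Matrix.mul_assoc, Matrix.mul_nonsing_inv _ hu, Matrix.mul_one]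
    rw [← this, h3]; simp
  have h5 := congrArg (fun M => (Matrix.trace M).re) h4
  simp only [Matrix.trace_add, Matrix.trace_conjTranspose, Complex.add_re, Complex.star_def,
    Complex.conj_re, Matrix.trace_zero, Complex.zero_re] at h5
  linarith

lemma aux_cayley_inv {n : ℕ} (F : Matrix (Fin n) (Fin n) ℂ) (hd : (F + 1).det ≠ 0) :
    (1 - (F - 1) * (F + 1)⁻¹).det ≠ 0 ∧
    (1 + (F - 1) * (F + 1)⁻¹) * (1 - (F - 1) * (F + 1)⁻¹)⁻¹ = F := by
  have hu : IsUnit (F + 1).det := isUnit_iff_ne_zero.2 hd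
  set R := (F + 1)⁻¹ with hR
  have hR1 : (F + 1) * R = 1 := Matrix.mul_nonsing_inv _ hu
  have hR2 : R * (F + 1) = 1 := Matrix.nonsing_inv_mul _ hu
  have e1 : 1 - (F - 1) * R = (2:ℂ) • R := by
    rw [two_smul]; nth_rewrite 1 [← hR1]; noncomm_ring
  have e2 : 1 + (F - 1) * R = (2:ℂ) • (F * R) := by
    rw [two_smul]; nth_rewrite 1 [← hR1]; noncomm_ring
  have e3 : (1 - (F - 1) * R) * ((2:ℂ)⁻¹ • (F + 1)) = 1 := by
    rw [e1, Matrix.smul_mul, Matrix.mul_smul, hR2, smul_smul]; norm_num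
  constructor
  · exact ((Matrix.isUnit_iff_isUnit_det _).1 (IsUnit.of_mul_eq_one _ e3)).ne_zero
  · rw [Matrix.inv_eq_right_inv e3, e2, Matrix.smul_mul, Matrix.mul_smul, Matrix.mul_assoc, hR2,
      smul_smul]; norm_num

/-! Closure of function classes under matrix operations -/

structure AuxClass (P : (ℂ → ℂ) → Prop) : Prop where
  add : ∀ f g, P f → P g → P (fun z => f z + g z)
  mul : ∀ f g, P f → P g → P (fun z => f z * g z)
  const : ∀ c, P (fun _ => c)

namespace AuxClass
variable {P : (ℂ → ℂ) → Prop} {n : ℕ}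

lemma sum (hP : AuxClass P) {ι : Type*} (s : Finset ι) (f : ι → ℂ → ℂ) (h : ∀ i, P (f i)) :
    P (fun z => ∑ i ∈ s, f i z) := by
  classical
  induction s using Finset.induction_on with
  | empty => simpa using hP.const 0
  | insert a s ha ih => simpa [Finset.sum_insert ha] using hP.add _ _ (h a) ih

lemma prod (hP : AuxClass P) {ι : Type*} (s : Finset ι) (f : ι → ℂ → ℂ) (h : ∀ i, P (f i)) :
    P (fun z => ∏ i ∈ s, f i z) := by
  classical
  induction s using Finset.induction_on with
  | empty => simpa using hP.const 1
  | insert a s ha ih => simpa [Finset.prod_insert ha] using hP.mul _ _ (h a) ih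

lemma det (hP : AuxClass P) (A : ℂ → Matrix (Fin n) (Fin n) ℂ) (h : ∀ i j, P (fun z => A z i j)) :
    P (fun z => (A z).det) := by
  simp only [Matrix.det_apply']
  exact hP.sum _ _ fun σ => hP.mul _ _ (hP.const _) (hP.prod _ _ fun i => h _ _)

lemma matmul (hP : AuxClass P) (A B : ℂ → Matrix (Fin n) (Fin n) ℂ)
    (hA : ∀ i j, P (fun z => A z i j)) (hB : ∀ i j, P (fun z => B z i j)) (i j : Fin n) :
    P (fun z => (A z * B z) i j) := by
  simp only [Matrix.mul_apply]
  exact hP.sum _ _ fun k => hP.mul _ _ (hA _ _) (hB _ _)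

lemma addc (hP : AuxClass P) (A : ℂ → Matrix (Fin n) (Fin n) ℂ)
    (hA : ∀ i j, P (fun z => A z i j)) (C : Matrix (Fin n) (Fin n) ℂ) (i j : Fin n) :
    P (fun z => (A z + C) i j) := by
  simp only [Matrix.add_apply]
  exact hP.add _ _ (hA _ _) (hP.const _)

lemma inv (hP : AuxClass P) (A : ℂ → Matrix (Fin n) (Fin n) ℂ) (h : ∀ i j, P (fun z => A z i j))
    (hd : P (fun z => ((A z).det)⁻¹)) (i j : Fin n) : P (fun z => (A z)⁻¹ i j) := by
  simp only [Matrix.inv_def, Ring.inverse_eq_inv', Matrix.smul_apply, smul_eq_mul,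
    Matrix.adjugate_apply]
  refine hP.mul _ _ hd (hP.det _ fun k l => ?_)
  by_cases hk : k = j
  · subst hk; simpa using hP.const _
  · simpa [Matrix.updateRow_ne hk] using h k l

end AuxClass

lemma aux_analytic_class (x : ℂ) : AuxClass (fun f => AnalyticAt ℂ f x) :=
  ⟨fun _ _ hf hg => hf.add hg, fun _ _ hf hg => hf.mul hg, fun _ => analyticAt_const⟩

lemma aux_mero_class (x : ℂ) : AuxClass (fun f => MeromorphicAt f x) :=
  ⟨fun _ _ hf hg => hf.add hg, fun _ _ hf hg => hf.mul hg, fun _ => MeromorphicAt.const _ _⟩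

/-! Gluing -/

lemma aux_glue (f : ℂ → ℂ) : ∃ g : ℂ → ℂ, ∃ U : Set ℂ, IsOpen U ∧
    (∀ x, (∃ h, AnalyticAt ℂ h x ∧ f =ᶠ[nhdsWithin x {x}ᶜ] h) → x ∈ U) ∧
    (∀ x ∈ U, f =ᶠ[nhdsWithin x {x}ᶜ] g) ∧
    AnalyticOnNhd ℂ g U ∧ (∀ x, AnalyticAt ℂ f x → g x = f x) := by
  classical
  let g : ℂ → ℂ := fun x => limUnder (nhdsWithin x {x}ᶜ) f
  have gval : ∀ x h, AnalyticAt ℂ h x → f =ᶠ[nhdsWithin x {x}ᶜ] h → g x = h x := by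
    intro x h hh he
    refine Tendsto.limUnder_eq ?_
    exact (hh.continuousAt.tendsto.mono_left nhdsWithin_le_nhds).congr' he.symm
  have gloc : ∀ x h, AnalyticAt ℂ h x → f =ᶠ[nhdsWithin x {x}ᶜ] h →
      ∀ᶠ y in nhds x, AnalyticAt ℂ h y ∧ f =ᶠ[nhdsWithin y {y}ᶜ] h := by
    intro x h hh he
    have he' : ∀ᶠ y in nhds x, y ≠ x → f y = h y := eventually_nhdsWithin_iff.1 he
    filter_upwards [hh.eventually_analyticAt, he'.eventually_nhds] with y hy1 hy2
    refine ⟨hy1, ?_⟩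
    by_cases hyx : y = x
    · subst hyx; exact he
    · refine Filter.EventuallyEq.filter_mono ?_ nhdsWithin_le_nhds
      filter_upwards [hy2, isOpen_ne.mem_nhds hyx] with w hw hwx using hw hwx
  have geq : ∀ x h, AnalyticAt ℂ h x → f =ᶠ[nhdsWithin x {x}ᶜ] h → g =ᶠ[nhds x] h := by
    intro x h hh he
    filter_upwards [gloc x h hh he] with y hy using gval y h hy.1 hy.2
  refine ⟨g, {x | ∃ h, AnalyticAt ℂ h x ∧ f =ᶠ[nhdsWithin x {x}ᶜ] h}, ?_, fun x hx => hx, ?_, ?_, ?_⟩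
  · rw [isOpen_iff_mem_nhds]
    rintro x ⟨h, hh, he⟩
    filter_upwards [gloc x h hh he] with y hy using ⟨h, hy⟩
  · rintro x ⟨h, hh, he⟩
    exact he.trans ((geq x h hh he).symm.filter_mono nhdsWithin_le_nhds)
  · rintro x ⟨h, hh, he⟩
    exact hh.congr (geq x h hh he).symm
  · intro x hx
    exact gval x f hx (EventuallyEq.refl _ _)

/-- bounded meromorphic functions along a set accumulating at the point extend -/
lemma aux_removable (f : ℂ → ℂ) (x : ℂ) (hf : MeromorphicAt f x)
    (hb : ∃ᶠ z in nhdsWithin x {x}ᶜ, ‖f z‖ ≤ 1) :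
    ∃ h, AnalyticAt ℂ h x ∧ f =ᶠ[nhdsWithin x {x}ᶜ] h := by
  have ho : 0 ≤ meromorphicOrderAt f x := by
    by_contra hneg
    push Not at hneg
    have ht := tendsto_cobounded_of_meromorphicOrderAt_neg hneg
    have h2 : ∀ᶠ z in nhdsWithin x {x}ᶜ, 1 < ‖f z‖ :=
      (tendsto_norm_atTop_iff_cobounded.2 ht).eventually_gt_atTop 1
    exact hb (h2.mono fun z hz => not_le.2 hz)
  refine ⟨toMeromorphicNFAt f x, ?_, hf.eq_nhdsNE_toMeromorphicNFAt⟩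
  rw [← MeromorphicNFAt.meromorphicOrderAt_nonneg_iff_analyticAt]
  · rwa [← meromorphicOrderAt_congr hf.eq_nhdsNE_toMeromorphicNFAt]
  · exact meromorphicNFAt_toMeromorphicNFAt

/-! Circle geometry -/
lemma aux_circle (θ η : ℝ) (hη : 0 < η) :
    ∀ᶠ y in nhds (Complex.exp (θ * Complex.I)), ‖y‖ = 1 →
      ∃ s : ℝ, |s - θ| < η ∧ y = Complex.exp (s * Complex.I) := by
  have hc : ContinuousAt (fun y : ℂ => (y * Complex.exp (-(θ * Complex.I))).arg)
      (Complex.exp (θ * Complex.I)) := by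
    refine ContinuousAt.comp (f := fun y : ℂ => y * Complex.exp (-(θ * Complex.I))) (g := Complex.arg) ?_ (by fun_prop)
    rw [← Complex.exp_add]
    simp [Complex.continuousAt_arg]
  have h0 : (Complex.exp (θ * Complex.I) * Complex.exp (-(θ * Complex.I))).arg = 0 := by
    rw [← Complex.exp_add]; simp
  have ht := hc.tendsto
  rw [h0] at ht
  have := ht.eventually (Metric.ball_mem_nhds (0:ℝ) hη)
  filter_upwards [this] with y hy hy1
  refine ⟨θ + (y * Complex.exp (-(θ * Complex.I))).arg, ?_, ?_⟩
  · simpa using hy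
  · have h3 := Complex.norm_mul_exp_arg_mul_I (y * Complex.exp (-(θ * Complex.I)))
    have h4 : ‖y * Complex.exp (-(θ * Complex.I))‖ = 1 := by
      rw [norm_mul, hy1, one_mul, ← neg_mul, ← Complex.ofReal_neg, Complex.norm_exp_ofReal_mul_I]
    rw [h4] at h3
    rw [Complex.ofReal_add, add_mul, Complex.exp_add]
    simp only [Complex.ofReal_one, one_mul] at h3
    rw [h3, mul_left_comm, ← Complex.exp_add]; simp

lemma aux_exp_dist (s t : ℝ) :
    ‖Complex.exp (s * Complex.I) - Complex.exp (t * Complex.I)‖ ≤ |s - t| := by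
  have := Real.norm_exp_I_mul_ofReal_sub_one_le (x := s - t)
  have e : Complex.exp (s * Complex.I) - Complex.exp (t * Complex.I)
     = Complex.exp (t * Complex.I) * (Complex.exp (Complex.I * ((s - t : ℝ) : ℂ)) - 1) := by
    rw [mul_sub, ← Complex.exp_add, mul_one]; congr 2; push_cast; ring
  rw [e, norm_mul, Complex.norm_exp_ofReal_mul_I, one_mul]
  simpa using this

/-- circle points accumulate at circle points -/
lemma aux_circle_acc (θ : ℝ) :
    ∃ᶠ z in nhdsWithin (Complex.exp (θ * Complex.I)) {Complex.exp (θ * Complex.I)}ᶜ, ‖z‖ = 1 := by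
  have ht : Tendsto (fun s : ℝ => Complex.exp (s * Complex.I)) (nhdsWithin θ {θ}ᶜ)
      (nhdsWithin (Complex.exp (θ * Complex.I)) {Complex.exp (θ * Complex.I)}ᶜ) := by
    refine tendsto_nhdsWithin_iff.2 ⟨?_, ?_⟩
    · have : Continuous (fun s : ℝ => Complex.exp (s * Complex.I)) := by fun_prop
      exact (this.tendsto θ).mono_left nhdsWithin_le_nhds
    · have hd : HasDerivAt (fun s : ℝ => Complex.exp (s * Complex.I))
          (Complex.exp (θ * Complex.I) * (1 * Complex.I)) θ := by
        have := ((hasDerivAt_id (θ:ℝ)).ofReal_comp.mul_const Complex.I).cexp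
        simpa using this
      exact hd.eventually_ne (by simp [Complex.exp_ne_zero])
  refine ht.frequently (Filter.Eventually.frequently ?_)
  exact Filter.Eventually.of_forall fun s => Complex.norm_exp_ofReal_mul_I s
/-! Integrals -/

lemma aux_kernel_re (t z : ℂ) (ht : ‖t‖ = 1) :
    ((t + z) / (t - z)).re = (1 - ‖z‖ ^ 2) / ‖t - z‖ ^ 2 := by
  rw [Complex.div_re, ← add_div, ← Complex.normSq_eq_norm_sq (t - z)]
  congr 1
  have h1 : t.re * t.re + t.im * t.im = 1 := by
    rw [← Complex.normSq_apply, Complex.normSq_eq_norm_sq, ht]; norm_num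
  rw [← Complex.normSq_eq_norm_sq z, Complex.normSq_apply]
  simp only [Complex.add_re, Complex.sub_re, Complex.add_im, Complex.sub_im]
  linear_combination h1

lemma aux_int (ν : Measure ℂ) (φ : ℂ → ℂ) (hφ : Integrable φ ν) (x : ℂ) (ε : ℝ) (hε : 0 < ε)
    (hν : ∀ᵐ t ∂ν, ‖t‖ = 1 ∧ (φ t = 0 ∨ ε ≤ ‖t - x‖)) :
    (∀ z ∈ Metric.ball x ε, Integrable (fun t => (t + z) / (t - z) * φ t) ν) ∧
    AnalyticAt ℂ (fun z => ∫ t, (t + z) / (t - z) * φ t ∂ν) x := by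
  have hmeas : ∀ z : ℂ, AEStronglyMeasurable (fun t => (t + z) / (t - z) * φ t) ν := by
    intro z
    refine AEStronglyMeasurable.mul ?_ hφ.aestronglyMeasurable
    exact ((measurable_id.add_const z).div (measurable_id.sub_const z)).aestronglyMeasurable
  have hmeas' : ∀ z : ℂ, AEStronglyMeasurable (fun t => (2 * t) / (t - z) ^ 2 * φ t) ν := by
    intro z
    refine AEStronglyMeasurable.mul ?_ hφ.aestronglyMeasurable
    exact ((measurable_id.const_mul 2).div ((measurable_id.sub_const z).pow_const 2)).aestronglyMeasurable
  have hint : ∀ z ∈ Metric.ball x ε, Integrable (fun t => (t + z) / (t - z) * φ t) ν := by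
    intro z hz
    rw [mem_ball_iff_norm] at hz
    have hr : 0 < ε - ‖z - x‖ := by linarith
    refine Integrable.mono' (hφ.norm.const_mul ((1 + ‖z‖) / (ε - ‖z - x‖))) (hmeas z) ?_
    filter_upwards [hν] with t ht
    rw [norm_mul]
    rcases ht.2 with h0 | h0
    · simp [h0]
    · refine mul_le_mul_of_nonneg_right ?_ (norm_nonneg _)
      rw [norm_div]
      have h1 : ‖t + z‖ ≤ 1 + ‖z‖ := by
        have := norm_add_le t z; rw [ht.1] at this; exact this
      have h2 : ε - ‖z - x‖ ≤ ‖t - z‖ := by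
        have : ‖t - x‖ ≤ ‖t - z‖ + ‖z - x‖ := by
          have := norm_add_le (t - z) (z - x); simpa using this
        linarith
      gcongr
  refine ⟨hint, ?_⟩
  have hdiff : DifferentiableOn ℂ (fun z => ∫ t, (t + z) / (t - z) * φ t ∂ν) (Metric.ball x ε) := by
    intro z₀ hz₀
    have hz₀' := hz₀
    rw [mem_ball_iff_norm] at hz₀
    set r := (ε - ‖z₀ - x‖) / 2 with hrdef
    have hr : 0 < r := by rw [hrdef]; linarith
    have key : ∀ t, ‖t‖ = 1 → ε ≤ ‖t - x‖ → ∀ z ∈ Metric.ball z₀ r, r ≤ ‖t - z‖ := by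
      intro t _ h0 z hz
      rw [mem_ball_iff_norm] at hz
      have h1 : ‖t - x‖ ≤ ‖t - z‖ + ‖z - z₀‖ + ‖z₀ - x‖ := by
        have h2 := norm_add_le (t - z) (z - z₀)
        have h3 := norm_add_le (t - z₀) (z₀ - x)
        simp at h2 h3
        linarith
      rw [hrdef] at hz ⊢
      linarith
    have := hasDerivAt_integral_of_dominated_loc_of_deriv_le (μ := ν) (𝕜 := ℂ)
      (F := fun z t => (t + z) / (t - z) * φ t)
      (F' := fun z t => (2 * t) / (t - z) ^ 2 * φ t) (x₀ := z₀) (s := Metric.ball z₀ r)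
      (bound := fun t => 2 / r ^ 2 * ‖φ t‖)
      (Metric.ball_mem_nhds z₀ hr) (Eventually.of_forall hmeas) (hint z₀ hz₀') (hmeas' z₀)
      (by
        filter_upwards [hν] with t ht z hz
        rw [norm_mul]
        rcases ht.2 with h0 | h0
        · simp [h0]
        · refine mul_le_mul_of_nonneg_right ?_ (norm_nonneg _)
          have := key t ht.1 h0 z hz
          rw [norm_div, norm_mul, ht.1, norm_pow]
          simp only [Complex.norm_ofNat, mul_one]
          gcongr)
      (hφ.norm.const_mul _)
      (by
        filter_upwards [hν] with t ht z hz
        rcases ht.2 with h0 | h0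
        · simp [h0]
          exact hasDerivAt_const _ _
        · have hne : t - z ≠ 0 := by
            have := key t ht.1 h0 z hz
            exact norm_pos_iff.1 (hr.trans_le this)
          have h1 := (((hasDerivAt_id z).const_add t).div ((hasDerivAt_id z).const_sub t) hne).mul_const (φ t)
          refine h1.congr_deriv ?_
          simp only [id]
          congr 2
          ring)
    exact this.2.differentiableAt.differentiableWithinAt
  exact hdiff.analyticAt (Metric.ball_mem_nhds x hε)

namespace MatrixMeasure
variable {n : ℕ} (μ : MatrixMeasure n)

lemma aux_ae_circle : ∀ᵐ t ∂μ.base, ‖t‖ = 1 := by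
  have := μ.circleSupp
  rw [ae_iff]
  convert this using 2
  ext t; simp

lemma aux_disk_sep (z : ℂ) (φ : ℂ → ℂ) :
    ∀ᵐ t ∂μ.base, ‖t‖ = 1 ∧ (φ t = 0 ∨ 1 - ‖z‖ ≤ ‖t - z‖) := by
  filter_upwards [μ.aux_ae_circle] with t ht
  refine ⟨ht, Or.inr ?_⟩
  have := norm_sub_norm_le t z
  rwa [ht] at this

lemma aux_cara_analytic (z : ℂ) (hz : ‖z‖ < 1) (i j : Fin n) :
    AnalyticAt ℂ (fun z => μ.cara z i j) z :=
  (aux_int μ.base _ (μ.dens_int i j) z (1 - ‖z‖) (by linarith) (μ.aux_disk_sep z _)).2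

lemma aux_disk_int (z : ℂ) (hz : ‖z‖ < 1) (i j : Fin n) :
    Integrable (fun t => (t + z) / (t - z) * μ.dens t i j) μ.base :=
  (aux_int μ.base _ (μ.dens_int i j) z (1 - ‖z‖) (by linarith) (μ.aux_disk_sep z _)).1 z
    (Metric.mem_ball_self (by linarith))

lemma aux_cara_skew (z : ℂ) (hz : ‖z‖ = 1) : (μ.cara z).conjTranspose = -μ.cara z := by
  ext i j
  simp only [Matrix.conjTranspose_apply, Matrix.neg_apply, cara, Matrix.of_apply, Complex.star_def]
  rw [← integral_conj, ← integral_neg]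
  refine integral_congr_ae ?_
  filter_upwards [μ.aux_ae_circle, μ.dens_psd] with t ht hp
  have h1 : (starRingEnd ℂ) (μ.dens t j i) = μ.dens t i j := hp.isHermitian.apply i j
  rw [map_mul, h1, ← neg_mul]
  congr 1
  have hc : ∀ w : ℂ, ‖w‖ = 1 → (starRingEnd ℂ) w = w⁻¹ := fun w hw => by
    rw [Complex.inv_def, Complex.normSq_eq_norm_sq, hw]; simp
  have hc0 : ∀ w : ℂ, ‖w‖ = 1 → w ≠ 0 := fun w hw h => by simp [h] at hw
  rw [map_div₀, map_add, map_sub, hc t ht, hc z hz]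
  have ht0 := hc0 t ht
  have hz0 := hc0 z hz
  by_cases h : t = z
  · subst h; simp
  · have h1 : t - z ≠ 0 := sub_ne_zero.2 h
    have h2 : z - t ≠ 0 := sub_ne_zero.2 (Ne.symm h)
    have h3 : t⁻¹ - z⁻¹ = (z - t) / (t * z) := by field_simp
    have h4 : t⁻¹ + z⁻¹ = (z + t) / (t * z) := by field_simp
    rw [h3, h4, div_div_div_cancel_right₀ (mul_ne_zero ht0 hz0), ← neg_sub t z, div_neg, add_comm]

lemma aux_cara_pos (z : ℂ) (hz : ‖z‖ < 1) (v : Fin n → ℂ) :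
    0 ≤ (star v ⬝ᵥ (μ.cara z).mulVec v).re := by
  have h1 : star v ⬝ᵥ (μ.cara z).mulVec v
      = ∫ t, (t + z) / (t - z) * (star v ⬝ᵥ (μ.dens t).mulVec v) ∂μ.base := by
    simp only [dotProduct, Matrix.mulVec, cara, Matrix.of_apply, Finset.mul_sum]
    rw [integral_finsetSum]
    · refine Finset.sum_congr rfl fun i _ => ?_
      rw [integral_finsetSum]
      · refine Finset.sum_congr rfl fun j _ => ?_
        rw [← integral_mul_const, ← integral_const_mul]
        congr 1; ext t; ring
      · intro j _
        refine (((μ.aux_disk_int z hz i j).const_mul (star v i)).mul_const (v j)).congr ?_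
        exact Eventually.of_forall fun t => by simp only []; ring
    · intro i _
      refine integrable_finsetSum _ fun j _ => ?_
      refine (((μ.aux_disk_int z hz i j).const_mul (star v i)).mul_const (v j)).congr ?_
      exact Eventually.of_forall fun t => by simp only []; ring
  have hint : Integrable (fun t => (t + z) / (t - z) * (star v ⬝ᵥ (μ.dens t).mulVec v)) μ.base := by
    simp only [dotProduct, Matrix.mulVec, Finset.mul_sum]
    refine integrable_finsetSum _ fun i _ => integrable_finsetSum _ fun j _ => ?_
    refine (((μ.aux_disk_int z hz i j).const_mul (star v i)).mul_const (v j)).congr ?_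
    exact Eventually.of_forall fun t => by simp only []; ring
  rw [h1]
  have h2 := integral_re hint
  simp only [RCLike.re_to_complex] at h2
  rw [← h2]
  refine integral_nonneg_of_ae ?_
  filter_upwards [μ.aux_ae_circle, μ.dens_psd] with t ht hp
  have h3 := Complex.le_def.1 (hp.dotProduct_mulVec_nonneg v)
  simp only [Complex.zero_re, Complex.zero_im] at h3
  simp only [Pi.zero_apply]
  rw [Complex.mul_re, ← h3.2, mul_zero, sub_zero, aux_kernel_re t z ht]
  refine mul_nonneg (div_nonneg ?_ (by positivity)) h3.1
  nlinarith [norm_nonneg z]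

lemma aux_cara_det (z : ℂ) (hz : ‖z‖ < 1) : (μ.cara z + 1).det ≠ 0 :=
  aux_det_ne _ (μ.aux_cara_pos z hz)

/-- real trace density -/
noncomputable def auxd (t : ℂ) : ℝ := (μ.dens t).trace.re

lemma auxd_meas : Measurable μ.auxd := by
  unfold auxd Matrix.trace
  refine Complex.measurable_re.comp ?_
  exact Finset.measurable_sum _ fun i _ => μ.dens_meas i i

lemma auxd_int : Integrable μ.auxd μ.base := by
  have : Integrable (fun t => (μ.dens t).trace) μ.base := by
    unfold Matrix.trace
    exact integrable_finsetSum _ fun i _ => μ.dens_int i i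
  exact this.re

lemma auxd_nonneg : ∀ᵐ t ∂μ.base, 0 ≤ μ.auxd t := by
  filter_upwards [μ.dens_psd] with t ht
  exact (Complex.le_def.1 ht.trace_nonneg).1

lemma auxd_zero : ∀ᵐ t ∂μ.base, μ.auxd t = 0 → μ.dens t = 0 := by
  filter_upwards [μ.dens_psd] with t ht h0
  refine ht.trace_eq_zero_iff.1 (Complex.ext h0 ?_)
  exact (Complex.le_def.1 ht.trace_nonneg).2.symm

/-- the trace measure -/
noncomputable def auxτ : Measure ℂ := μ.base.withDensity fun t => ENNReal.ofReal (μ.auxd t)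

lemma aux_meas_zero_of_ae (A : Set ℂ) (h : ∀ᵐ t ∂μ.base.restrict A, μ.dens t = 0) :
    μ.meas A = 0 := by
  ext i j
  simp only [meas, Matrix.of_apply, Matrix.zero_apply]
  rw [← integral_zero ℂ ℂ (μ := μ.base.restrict A)]
  refine integral_congr_ae ?_
  filter_upwards [h] with t ht
  simp [ht]

lemma aux_ae_of_meas_zero (A : Set ℂ) (h : μ.meas A = 0) :
    ∀ᵐ t ∂μ.base.restrict A, μ.dens t = 0 := by
  have h1 : ∫ t in A, μ.auxd t ∂μ.base = 0 := by
    have h2 : ∫ t in A, (μ.dens t).trace ∂μ.base = (μ.meas A).trace := by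
      simp only [Matrix.trace, Matrix.diag, meas, Matrix.of_apply]
      rw [integral_finsetSum]
      intro i _
      exact (μ.dens_int i i).integrableOn
    have h3 : Integrable (fun t => (μ.dens t).trace) (μ.base.restrict A) := by
      unfold Matrix.trace
      exact integrable_finsetSum _ fun i _ => (μ.dens_int i i).integrableOn
    have h4 := integral_re h3
    simp only [RCLike.re_to_complex] at h4
    unfold auxd
    rw [h4, h2, h]; simp
  rw [integral_eq_zero_iff_of_nonneg_ae (ae_restrict_of_ae μ.auxd_nonneg)
    μ.auxd_int.integrableOn] at h1
  filter_upwards [h1, ae_restrict_of_ae μ.auxd_zero] with t h5 h6 using h6 h5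

lemma aux_meas_zero_of_τ (A : Set ℂ) (hA : MeasurableSet A) (h : μ.auxτ A = 0) :
    μ.meas A = 0 := by
  refine μ.aux_meas_zero_of_ae A ?_
  rw [auxτ, withDensity_apply _ hA, lintegral_eq_zero_iff μ.auxd_meas.ennreal_ofReal] at h
  filter_upwards [h, ae_restrict_of_ae μ.auxd_zero, ae_restrict_of_ae μ.auxd_nonneg] with t h1 h2 h3
  refine h2 (le_antisymm ?_ h3)
  simpa using h1

lemma auxτ_off : μ.auxτ (Metric.sphere (0:ℂ) 1)ᶜ = 0 :=
  withDensity_absolutelyContinuous _ _ μ.circleSupp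

lemma auxτ_bound (y : ℂ) (hy : ‖y‖ = 1) (δ : ℝ) (h0 : 0 < δ) (h1 : δ < 1) :
    μ.auxτ (Metric.closedBall y δ) ≤
      ENNReal.ofReal (4 * δ * (μ.cara ((1 - δ : ℝ) • y)).trace.re) := by
  set z : ℂ := (1 - δ : ℝ) • y with hzdef
  have hzn : ‖z‖ = 1 - δ := by
    rw [hzdef, norm_smul, hy, mul_one, Real.norm_of_nonneg (by linarith)]
  have hz : ‖z‖ < 1 := by linarith
  have htr : (μ.cara z).trace = ∫ t, (t + z) / (t - z) * (μ.dens t).trace ∂μ.base := by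
    simp only [Matrix.trace, Matrix.diag, cara, Matrix.of_apply, Finset.mul_sum]
    rw [integral_finsetSum]
    intro i _
    exact μ.aux_disk_int z hz i i
  have hint : Integrable (fun t => (t + z) / (t - z) * (μ.dens t).trace) μ.base := by
    simp only [Matrix.trace, Matrix.diag, Finset.mul_sum]
    exact integrable_finsetSum _ fun i _ => μ.aux_disk_int z hz i i
  have hre := integral_re hint
  simp only [RCLike.re_to_complex] at hre
  rw [auxτ, withDensity_apply _ Metric.isClosed_closedBall.measurableSet,
    ← ofReal_integral_eq_lintegral_ofReal μ.auxd_int.integrableOn (ae_restrict_of_ae μ.auxd_nonneg)]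
  refine ENNReal.ofReal_le_ofReal ?_
  rw [htr, ← hre, ← integral_const_mul, 
    ← integral_indicator Metric.isClosed_closedBall.measurableSet]
  refine integral_mono_ae (μ.auxd_int.indicator Metric.isClosed_closedBall.measurableSet)
    (hint.re.const_mul _) ?_
  filter_upwards [μ.aux_ae_circle, μ.dens_psd] with t ht hp
  have h3 := Complex.le_def.1 hp.trace_nonneg
  simp only [Complex.zero_re, Complex.zero_im] at h3
  rw [Complex.mul_re, ← h3.2, mul_zero, sub_zero, aux_kernel_re t z ht, hzn]
  have hpos : 0 ≤ (1 - (1 - δ) ^ 2) / ‖t - z‖ ^ 2 := div_nonneg (by nlinarith) (by positivity)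
  by_cases hmem : t ∈ Metric.closedBall y δ
  · rw [Set.indicator_of_mem hmem, ← mul_assoc]
    refine le_mul_of_one_le_left h3.1 ?_
    rw [mem_closedBall_iff_norm] at hmem
    have hyz : ‖y - z‖ = δ := by
      have : y - z = (δ : ℝ) • y := by rw [hzdef, sub_smul, one_smul]; abel
      rw [this, norm_smul, hy, mul_one, Real.norm_of_nonneg h0.le]
    have h4 : ‖t - z‖ ≤ 2 * δ := by
      have := norm_add_le (t - y) (y - z)
      simp only [sub_add_sub_cancel] at this
      linarith
    have h5 : 0 < ‖t - z‖ := by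
      have := norm_sub_norm_le t z
      linarith
    rw [mul_div_assoc', le_div_iff₀ (by positivity)]
    have h6 : ‖t - z‖ ^ 2 ≤ (2 * δ) ^ 2 := by gcongr
    have h7 : 0 ≤ δ ^ 2 * (1 - δ) := mul_nonneg (sq_nonneg _) (by linarith)
    linarith [h6, h7]
  · rw [Set.indicator_of_notMem hmem]
    exact mul_nonneg (by linarith) (mul_nonneg hpos h3.1)

end MatrixMeasure

lemma aux_cover (τ : Measure ℂ) (θ η K δ₀ : ℝ) (hη : 0 < η) (hK : 0 ≤ K) (hδ₀ : 0 < δ₀)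
    (h : ∀ s : ℝ, |s - θ| ≤ η → ∀ δ, 0 < δ → δ < δ₀ →
      τ (Metric.closedBall (Complex.exp (s * Complex.I)) δ) ≤ ENNReal.ofReal (K * δ ^ 2)) :
    τ ((fun s : ℝ => Complex.exp (s * Complex.I)) '' {s | |s - θ| < η}) = 0 := by
  set S := (fun s : ℝ => Complex.exp (s * Complex.I)) '' {s | |s - θ| < η}
  have hlim : Tendsto (fun N : ℕ => ENNReal.ofReal ((8 * K * η ^ 2) * (1 / ((N:ℝ) + 1)))) atTop
      (nhds 0) := by
    have h1 := (tendsto_one_div_add_atTop_nhds_zero_nat (𝕜 := ℝ)).const_mul (8 * K * η ^ 2)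
    rw [mul_zero] at h1
    have := ENNReal.tendsto_ofReal h1
    simpa using this
  have hsm : ∀ᶠ N : ℕ in atTop, 2 * η * (1 / ((N:ℝ) + 1)) < δ₀ := by
    have h1 := (tendsto_one_div_add_atTop_nhds_zero_nat (𝕜 := ℝ)).const_mul (2 * η)
    rw [mul_zero] at h1
    exact h1.eventually (gt_mem_nhds hδ₀)
  refine le_antisymm (ge_of_tendsto hlim ?_) bot_le
  filter_upwards [hsm] with N hN
  set M : ℝ := (N:ℝ) + 1 with hM
  have hMpos : 0 < M := by positivity
  set d := 2 * η * (1 / M) with hd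
  have hdpos : 0 < d := by positivity
  have hdM : d * M = 2 * η := by rw [hd]; field_simp
  have hsub : S ⊆ ⋃ k ∈ Finset.range (N + 1),
      Metric.closedBall (Complex.exp ((θ - η + d * k : ℝ) * Complex.I)) d := by
    rintro _ ⟨s, hs, rfl⟩
    simp only [Set.mem_ofPred_eq] at hs
    rw [abs_lt] at hs
    have hq : 0 ≤ (s - (θ - η)) / d := div_nonneg (by linarith) hdpos.le
    have hfl := Nat.floor_le hq
    have hfl2 := Nat.lt_floor_add_one ((s - (θ - η)) / d)
    rw [le_div_iff₀ hdpos] at hfl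
    rw [div_lt_iff₀ hdpos] at hfl2
    simp only [Set.mem_iUnion, Finset.mem_range]
    refine ⟨⌊(s - (θ - η)) / d⌋₊, ?_, ?_⟩
    · rw [Nat.floor_lt hq, div_lt_iff₀ hdpos]
      push_cast
      rw [← hM, mul_comm, hdM]; linarith
    · rw [mem_closedBall_iff_norm]
      refine (aux_exp_dist _ _).trans ?_
      rw [abs_le]
      constructor <;> nlinarith
  refine (measure_mono hsub).trans ((measure_biUnion_finset_le _ _).trans ?_)
  have hb : ∀ k ∈ Finset.range (N + 1),
      τ (Metric.closedBall (Complex.exp ((θ - η + d * k : ℝ) * Complex.I)) d) ≤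
        ENNReal.ofReal (K * d ^ 2) := by
    intro k hk
    refine h _ ?_ d hdpos hN
    have hk' : (k:ℝ) ≤ M := by
      have := Finset.mem_range.1 hk
      rw [hM]; exact_mod_cast this.le
    have h1 : d * k ≤ 2 * η := by rw [← hdM]; gcongr
    have h2 : 0 ≤ d * k := by positivity
    rw [abs_le]; constructor <;> linarith
  refine (Finset.sum_le_sum hb).trans ?_
  rw [Finset.sum_const, Finset.card_range, nsmul_eq_mul, ← ENNReal.ofReal_natCast,
    ← ENNReal.ofReal_mul (by positivity)]
  refine ENNReal.ofReal_le_ofReal ?_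
  push_cast
  rw [← hM]
  have : M * (K * d ^ 2) = 4 * K * η ^ 2 * (1 / M) := by
    rw [hd]; field_simp; ring
  rw [this]
  have : 0 ≤ K * η ^ 2 * (1 / M) := by positivity
  linarith
namespace MatrixMeasure
variable {n : ℕ} (μ : MatrixMeasure n)

lemma aux_schur_analytic (z : ℂ) (hz : ‖z‖ < 1) (hz0 : z ≠ 0) (i j : Fin n) :
    AnalyticAt ℂ (fun z => μ.schur z i j) z := by
  have hP := aux_analytic_class z
  have hc := μ.aux_cara_analytic z hz
  have h1 := hP.addc _ hc 1
  have h2 := hP.addc _ hc (-1)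
  have hd := hP.det _ h1
  have hdi : AnalyticAt ℂ (fun z => ((μ.cara z + 1).det)⁻¹) z :=
    AnalyticAt.fun_inv hd (μ.aux_cara_det z hz)
  have h3 := hP.matmul _ _ h2 (hP.inv _ h1 hdi) i j
  have h4 : AnalyticAt ℂ (fun z : ℂ => z⁻¹) z := analyticAt_inv hz0
  have h5 := hP.mul _ _ h4 h3
  simpa only [schur, Matrix.smul_apply, smul_eq_mul, sub_eq_add_neg] using h5

lemma aux_schur_mero (x : ℂ) (ε : ℝ) (hε : 0 < ε)
    (h : ∀ᵐ t ∂μ.base, t ∈ Metric.ball x ε → t ≠ x → μ.dens t = 0) (i j : Fin n) :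
    MeromorphicAt (fun z => μ.schur z i j) x := by
  have hP := aux_mero_class x
  have hc : ∀ i j, MeromorphicAt (fun z => μ.cara z i j) x := by
    intro i j
    have hν : ∀ᵐ t ∂μ.base.restrict {x}ᶜ, ‖t‖ = 1 ∧ (μ.dens t i j = 0 ∨ ε ≤ ‖t - x‖) := by
      rw [ae_restrict_iff' (measurableSet_singleton x).compl]
      filter_upwards [h, μ.aux_ae_circle] with t h1 h2 h3
      refine ⟨h2, ?_⟩
      by_cases h4 : t ∈ Metric.ball x ε
      · left; rw [h1 h4 h3]; rfl
      · right; rw [mem_ball_iff_norm, not_lt] at h4; exact h4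
    have hI := aux_int _ _ ((μ.dens_int i j).integrableOn (s := {x}ᶜ)) x ε hε hν
    have hm : MeromorphicAt (fun z => (μ.base.real {x} : ℂ) * ((x + z) / (x - z) * μ.dens x i j) +
        ∫ t in {x}ᶜ, (t + z) / (t - z) * μ.dens t i j ∂μ.base) x := by
      refine MeromorphicAt.add ?_ hI.2.meromorphicAt
      have e1 : MeromorphicAt (fun z : ℂ => x + z) x := (by fun_prop : AnalyticAt ℂ (fun z : ℂ => x + z) x).meromorphicAt
      have e2 : MeromorphicAt (fun z : ℂ => x - z) x := (by fun_prop : AnalyticAt ℂ (fun z : ℂ => x - z) x).meromorphicAt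
      exact (MeromorphicAt.const _ _).mul ((e1.div e2).mul (MeromorphicAt.const _ _))
    refine hm.congr (Filter.EventuallyEq.filter_mono ?_ nhdsWithin_le_nhds)
    filter_upwards [Metric.ball_mem_nhds x hε] with z hz
    have hfin := μ.finite
    have i1 : IntegrableOn (fun t => (t + z) / (t - z) * μ.dens t i j) {x} μ.base := by
      refine integrableOn_singleton (hx := ?_)
      exact measure_lt_top μ.base _
    have i2 : IntegrableOn (fun t => (t + z) / (t - z) * μ.dens t i j) {x}ᶜ μ.base := hI.1 z hz
    have i3 : Integrable (fun t => (t + z) / (t - z) * μ.dens t i j) μ.base := by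
      have := i1.union i2
      rwa [Set.union_compl_self, integrableOn_univ] at this
    simp only [cara, Matrix.of_apply]
    rw [← integral_add_compl (measurableSet_singleton x) i3, integral_singleton]
    simp
  have h1 := hP.addc _ hc 1
  have h2 := hP.addc _ hc (-1)
  have hd := hP.det _ h1
  have hdi : MeromorphicAt (fun z => ((μ.cara z + 1).det)⁻¹) x := MeromorphicAt.fun_inv hd
  have h3 := hP.matmul _ _ h2 (hP.inv _ h1 hdi) i j
  have h4 : MeromorphicAt (fun z : ℂ => z⁻¹) x := (MeromorphicAt.id x).inv
  have h5 := hP.mul _ _ h4 h3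
  simpa only [schur, Matrix.smul_apply, smul_eq_mul, sub_eq_add_neg] using h5

lemma aux_schur_unitary (z : ℂ) (hz : ‖z‖ = 1) :
    μ.schur z ∈ Matrix.unitaryGroup (Fin n) ℂ :=
  aux_cayley_unitary _ (μ.aux_cara_skew z hz) z hz

lemma aux_isolated (x : ℂ) (hx : x ∉ μ.limitPts) :
    ∃ ε > 0, ∀ᵐ t ∂μ.base, t ∈ Metric.ball x ε → t ≠ x → μ.dens t = 0 := by
  have hx' : x ∉ closure (μ.supp \ {x}) := hx
  rw [Metric.mem_closure_iff] at hx'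
  push Not at hx'
  obtain ⟨ε, hε, hb⟩ := hx'
  refine ⟨ε, hε, ?_⟩
  rw [ae_iff]
  refine measure_null_of_locally_null _ fun y hy => ?_
  simp only [Set.mem_ofPred_eq, Classical.not_imp] at hy
  have hys : y ∉ μ.supp := by
    intro h
    have := hb y ⟨h, hy.2.1⟩
    rw [dist_comm] at this
    exact absurd hy.1 (not_lt.2 this)
  simp only [supp, Set.mem_ofPred_eq, not_forall, not_not] at hys
  obtain ⟨r, hr, hm⟩ := hys
  refine ⟨{t | t ∈ Metric.ball y r ∧ μ.dens t ≠ 0}, ?_, ?_⟩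
  · rw [mem_nhdsWithin_iff_exists_mem_nhds_inter]
    refine ⟨Metric.ball y r, Metric.ball_mem_nhds y hr, ?_⟩
    rintro t ⟨ht1, ht2⟩
    simp only [Set.mem_ofPred_eq, Classical.not_imp] at ht2
    exact ⟨ht1, ht2.2.2⟩
  · have := μ.aux_ae_of_meas_zero _ hm
    rw [ae_restrict_iff' Metric.isOpen_ball.measurableSet, ae_iff] at this
    convert this using 2
    ext t; simp

lemma aux_forward (Γ : Set ℂ) (hΓ : ∀ x ∈ Γ, ∃ θ : ℝ, x = Complex.exp (θ * Complex.I))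
    (h : Γ ∩ μ.limitPts = ∅) :
      ∃ (U : Set ℂ) (g : ℂ → Matrix (Fin n) (Fin n) ℂ), IsOpen U ∧ Γ ⊆ U ∧
        (∀ i j, AnalyticOnNhd ℂ (fun z => g z i j) U) ∧
        (∀ z ∈ U, ‖z‖ < 1 → z ≠ 0 → g z = μ.schur z) ∧
        (∀ z ∈ Γ, g z ∈ Matrix.unitaryGroup (Fin n) ℂ) := by
  choose g U hU hmem heq han hval using fun i j : Fin n => aux_glue (fun z => μ.schur z i j)
  have hΓU : ∀ x ∈ Γ, ∀ i j, x ∈ U i j := by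
    intro x hx i j
    apply hmem
    have hnl : x ∉ μ.limitPts := fun h2 => by
      have : x ∈ Γ ∩ μ.limitPts := ⟨hx, h2⟩
      simp [h] at this
    obtain ⟨ε, hε, hae⟩ := μ.aux_isolated x hnl
    refine aux_removable _ x (μ.aux_schur_mero x ε hε hae i j) ?_
    obtain ⟨θ, rfl⟩ := hΓ x hx
    exact (aux_circle_acc θ).mono fun z hz => 
      entry_norm_bound_of_unitary (μ.aux_schur_unitary z hz) i j
  refine ⟨⋂ i, ⋂ j, U i j, fun z => Matrix.of fun i j => g i j z, ?_, ?_, ?_, ?_, ?_⟩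
  · exact isOpen_iInter_of_finite fun i => isOpen_iInter_of_finite fun j => hU i j
  · intro x hx
    simp only [Set.mem_iInter]
    exact hΓU x hx
  · intro i j
    refine (han i j).mono ?_
    intro x hx
    simp only [Set.mem_iInter] at hx
    exact hx i j
  · intro z _ hz hz0
    ext i j
    exact hval i j z (μ.aux_schur_analytic z hz hz0 i j)
  · intro x hx
    have hc : ContinuousAt (fun z => (Matrix.of fun i j => g i j z : Matrix (Fin n) (Fin n) ℂ)) x := by
      refine continuousAt_pi.2 fun i => continuousAt_pi.2 fun j => ?_
      exact (han i j x (hΓU x hx i j)).continuousAt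
    have hev : ∀ᶠ z in nhdsWithin x {x}ᶜ, ∀ i j, μ.schur z i j = g i j z :=
      eventually_all.2 fun i => eventually_all.2 fun j => heq i j x (hΓU x hx i j)
    have hfr : ∃ᶠ z in nhdsWithin x {x}ᶜ, ‖z‖ = 1 := by
      obtain ⟨θ, rfl⟩ := hΓ x hx
      exact aux_circle_acc θ
    rw [Matrix.mem_unitaryGroup_iff]
    have hc2 : ContinuousAt (fun z => (Matrix.of fun i j => g i j z : Matrix (Fin n) (Fin n) ℂ) *
        star (Matrix.of fun i j => g i j z : Matrix (Fin n) (Fin n) ℂ)) x := hc.mul hc.star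
    by_contra hne
    have h1 : ∀ᶠ z in nhdsWithin x {x}ᶜ, (Matrix.of fun i j => g i j z : Matrix (Fin n) (Fin n) ℂ) *
        star (Matrix.of fun i j => g i j z : Matrix (Fin n) (Fin n) ℂ) ≠ 1 :=
      (hc2.eventually_ne hne).filter_mono nhdsWithin_le_nhds
    obtain ⟨z, hz1, hz2, hz3⟩ := (hfr.and_eventually (h1.and hev)).exists
    apply hz2
    have : (Matrix.of fun i j => g i j z : Matrix (Fin n) (Fin n) ℂ) = μ.schur z := by
      ext i j; exact (hz3 i j).symm
    rw [this]
    exact Matrix.mem_unitaryGroup_iff.1 (μ.aux_schur_unitary z hz1)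

/-- Off the zeros of `det (1 - z g)`, points of the arc are not in the support. -/
lemma aux_notsupp (a b θ : ℝ) (hθ : θ ∈ Set.Ioo a b) (U : Set ℂ)
    (g : ℂ → Matrix (Fin n) (Fin n) ℂ) (hU : IsOpen U)
    (hΓU : ∀ s ∈ Set.Ioo a b, Complex.exp ((s:ℝ) * Complex.I) ∈ U)
    (han : ∀ i j, AnalyticOnNhd ℂ (fun z => g z i j) U)
    (heq : ∀ z ∈ U, ‖z‖ < 1 → z ≠ 0 → g z = μ.schur z)
    (hun : ∀ s ∈ Set.Ioo a b, g (Complex.exp ((s:ℝ) * Complex.I)) ∈ Matrix.unitaryGroup (Fin n) ℂ)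
    (hd : (1 - Complex.exp (θ * Complex.I) • g (Complex.exp (θ * Complex.I))).det ≠ 0) :
    Complex.exp (θ * Complex.I) ∉ μ.supp := by
  set y := Complex.exp (θ * Complex.I) with hy
  have hyU : y ∈ U := hΓU θ hθ
  have hP := aux_analytic_class y
  have hW : ∀ i j, AnalyticAt ℂ (fun z => (z • g z) i j) y := fun i j =>
    hP.mul _ _ analyticAt_id (han i j y hyU)
  have hA : ∀ i j, AnalyticAt ℂ (fun z => (1 + z • g z) i j) y := fun i j =>
    hP.add _ _ (hP.const _) (hW i j)
  have hB : ∀ i j, AnalyticAt ℂ (fun z => (1 - z • g z) i j) y := fun i j =>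
    AnalyticAt.fun_sub (hP.const _) (hW i j)
  have hdet := hP.det _ hB
  have hinv := hP.inv _ hB (AnalyticAt.fun_inv hdet hd)
  have hG := hP.matmul _ _ hA hinv
  have htr : AnalyticAt ℂ (fun z => ((1 + z • g z) * (1 - z • g z)⁻¹).trace) y :=
    hP.sum Finset.univ _ fun i => hG i i
  obtain ⟨K, t, ht, hK⟩ := (htr.contDiffAt (n := 1)).exists_lipschitzOnWith
  have hnb : ∀ᶠ z in nhds y, z ∈ t ∧ z ∈ U ∧ (1 - z • g z).det ≠ 0 := by
    filter_upwards [ht, hU.mem_nhds hyU, hdet.continuousAt.eventually_ne hd] with z h1 h2 h3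
      using ⟨h1, h2, h3⟩
  obtain ⟨r, hr, hball⟩ := Metric.eventually_nhds_iff_ball.1 hnb
  obtain ⟨η, hη, hη1, hη2, hη3⟩ : ∃ η > 0, η < r / 2 ∧ η < θ - a ∧ η < b - θ := by
    have h1 : 0 < min (r / 2) (min (θ - a) (b - θ)) :=
      lt_min (by linarith) (lt_min (by linarith [hθ.1]) (by linarith [hθ.2]))
    refine ⟨min (r / 2) (min (θ - a) (b - θ)) / 2, by linarith, ?_, ?_, ?_⟩
    · linarith [min_le_left (r / 2) (min (θ - a) (b - θ))]
    · linarith [min_le_right (r / 2) (min (θ - a) (b - θ)), min_le_left (θ - a) (b - θ)]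
    · linarith [min_le_right (r / 2) (min (θ - a) (b - θ)), min_le_right (θ - a) (b - θ)]
  have hcov := aux_cover μ.auxτ θ η (4 * K) (min (r / 2) 1) hη (by positivity)
    (lt_min (by linarith) one_pos) (by
      intro s hs δ hδ0 hδ
      have hδ1 : δ < r / 2 := hδ.trans_le (min_le_left _ _)
      have hδ2 : δ < 1 := hδ.trans_le (min_le_right _ _)
      set y' := Complex.exp (s * Complex.I) with hy'
      have hn : ‖y'‖ = 1 := Complex.norm_exp_ofReal_mul_I s
      have hsI : s ∈ Set.Ioo a b := by
        rw [abs_le] at hs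
        exact ⟨by linarith, by linarith⟩
      have hd1 : ‖y' - y‖ ≤ η := (aux_exp_dist s θ).trans hs
      refine (μ.auxτ_bound y' hn δ hδ0 hδ2).trans (ENNReal.ofReal_le_ofReal ?_)
      set z : ℂ := (1 - δ : ℝ) • y' with hzdef
      have hzn : ‖z‖ = 1 - δ := by
        rw [hzdef, norm_smul, hn, mul_one, Real.norm_of_nonneg (by linarith)]
      have hzy : ‖z - y'‖ = δ := by
        have : z - y' = -((δ : ℝ) • y') := by rw [hzdef, sub_smul, one_smul]; abel
        rw [this, norm_neg, norm_smul, hn, mul_one, Real.norm_of_nonneg hδ0.le]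
      have hb1 : y' ∈ Metric.ball y r := by rw [mem_ball_iff_norm]; linarith
      have hb2 : z ∈ Metric.ball y r := by
        rw [mem_ball_iff_norm]
        have := norm_add_le (z - y') (y' - y)
        rw [sub_add_sub_cancel] at this
        linarith
      obtain ⟨p1, p2, p3⟩ := hball y' hb1
      obtain ⟨q1, q2, q3⟩ := hball z hb2
      have hz0 : z ≠ 0 := by
        rw [← norm_pos_iff]; linarith
      have hzlt : ‖z‖ < 1 := by linarith
      have hzero : (((1 + y' • g y') * (1 - y' • g y')⁻¹).trace).re = 0 := by
        refine aux_cayley_skew _ ?_ p3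
        have h1 := Matrix.mem_unitaryGroup_iff.1 (hun s hsI)
        rw [Matrix.mem_unitaryGroup_iff, star_smul, Matrix.smul_mul, Matrix.mul_smul, h1, smul_smul,
          Complex.star_def, Complex.mul_conj, Complex.normSq_eq_norm_sq, hn]
        simp
      have hcar : (1 + z • g z) * (1 - z • g z)⁻¹ = μ.cara z := by
        have : z • g z = (μ.cara z - 1) * (μ.cara z + 1)⁻¹ := by
          rw [heq z q2 hzlt hz0, schur, smul_smul, mul_inv_cancel₀ hz0, one_smul]
        rw [this]
        exact (aux_cayley_inv _ (μ.aux_cara_det z hzlt)).2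
      have hlip := hK.norm_sub_le q1 p1
      rw [hzy] at hlip
      have hre := (Complex.abs_re_le_norm _).trans hlip
      rw [Complex.sub_re, hzero, sub_zero, hcar] at hre
      have := (le_abs_self _).trans hre
      nlinarith)
  obtain ⟨ρ, hρ, hρb⟩ := Metric.eventually_nhds_iff_ball.1 (aux_circle θ η hη)
  intro hsupp
  refine hsupp ρ hρ (μ.aux_meas_zero_of_τ _ Metric.isOpen_ball.measurableSet ?_)
  refine measure_mono_null (t := (Metric.sphere (0:ℂ) 1)ᶜ ∪ _) ?_ (measure_union_null μ.auxτ_off hcov)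
  intro w hw
  by_cases hw1 : ‖w‖ = 1
  · right
    obtain ⟨s, hs, rfl⟩ := hρb w hw hw1
    exact ⟨s, hs, rfl⟩
  · left
    simpa using hw1

lemma aux_supp_circle (y : ℂ) (hy : y ∈ μ.supp) : ‖y‖ = 1 := by
  by_contra hne
  have hop : IsOpen (Metric.sphere (0:ℂ) 1)ᶜ := Metric.isClosed_sphere.isOpen_compl
  obtain ⟨ε, hε, hb⟩ := Metric.isOpen_iff.1 hop y (by simpa using hne)
  refine hy ε hε (μ.aux_meas_zero_of_ae _ ?_)
  have : μ.base.restrict (Metric.ball y ε) = 0 :=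
    Measure.restrict_eq_zero.2 (measure_mono_null hb μ.circleSupp)
  rw [this]
  simp

lemma aux_backward (a b : ℝ) (U : Set ℂ)
    (g : ℂ → Matrix (Fin n) (Fin n) ℂ) (hU : IsOpen U)
    (hΓU : ∀ s ∈ Set.Ioo a b, Complex.exp ((s:ℝ) * Complex.I) ∈ U)
    (han : ∀ i j, AnalyticOnNhd ℂ (fun z => g z i j) U)
    (heq : ∀ z ∈ U, ‖z‖ < 1 → z ≠ 0 → g z = μ.schur z)
    (hun : ∀ s ∈ Set.Ioo a b, g (Complex.exp ((s:ℝ) * Complex.I)) ∈ Matrix.unitaryGroup (Fin n) ℂ)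
    (θ : ℝ) (hθ : θ ∈ Set.Ioo a b) : Complex.exp (θ * Complex.I) ∉ μ.limitPts := by
  set x := Complex.exp (θ * Complex.I) with hx
  have hxn : ‖x‖ = 1 := Complex.norm_exp_ofReal_mul_I θ
  have hxU : x ∈ U := hΓU θ hθ
  have hP := aux_analytic_class x
  have hB : ∀ i j, AnalyticAt ℂ (fun z => (1 - z • g z) i j) x := fun i j =>
    AnalyticAt.fun_sub (hP.const _) (hP.mul _ _ analyticAt_id (han i j x hxU))
  have hdet := hP.det _ hB
  have hne : ∀ᶠ z in nhdsWithin x {x}ᶜ, (1 - z • g z).det ≠ 0 := by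
    rcases hdet.eventually_eq_zero_or_eventually_ne_zero with h0 | h0
    · exfalso
      have ht : Tendsto (fun δ : ℝ => (1 - δ : ℝ) • x) (nhdsWithin 0 (Set.Ioi 0)) (nhds x) := by
        have hc : Continuous (fun δ : ℝ => (1 - δ : ℝ) • x) := by fun_prop
        have := hc.tendsto 0
        simp only [sub_zero, one_smul] at this
        exact this.mono_left nhdsWithin_le_nhds
      have e1 := ht.eventually (h0.and (hU.mem_nhds hxU))
      have e2 : ∀ᶠ δ : ℝ in nhdsWithin 0 (Set.Ioi 0), δ < 1 :=
        (gt_mem_nhds one_pos).filter_mono nhdsWithin_le_nhds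
      have e3 : ∀ᶠ δ : ℝ in nhdsWithin 0 (Set.Ioi 0), 0 < δ := self_mem_nhdsWithin
      obtain ⟨δ, ⟨h1, h2⟩, h3, h4⟩ := (e1.and (e2.and e3)).exists
      set z : ℂ := (1 - δ : ℝ) • x with hzdef
      have hzn : ‖z‖ = 1 - δ := by
        rw [hzdef, norm_smul, hxn, mul_one, Real.norm_of_nonneg (by linarith)]
      have hz0 : z ≠ 0 := by
        rw [← norm_pos_iff]; linarith
      have hzlt : ‖z‖ < 1 := by linarith
      have h5 : z • g z = (μ.cara z - 1) * (μ.cara z + 1)⁻¹ := by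
        rw [heq z h2 hzlt hz0, schur, smul_smul, mul_inv_cancel₀ hz0, one_smul]
      rw [h5] at h1
      exact (aux_cayley_inv _ (μ.aux_cara_det z hzlt)).1 h1
    · exact h0
  obtain ⟨η, hη, hη2, hη3⟩ : ∃ η > 0, η < θ - a ∧ η < b - θ := by
    have h1 : 0 < min (θ - a) (b - θ) := lt_min (by linarith [hθ.1]) (by linarith [hθ.2])
    refine ⟨min (θ - a) (b - θ) / 2, by linarith, ?_, ?_⟩
    · linarith [min_le_left (θ - a) (b - θ)]
    · linarith [min_le_right (θ - a) (b - θ)]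
  have hall := (eventually_nhdsWithin_iff.1 hne).and (aux_circle θ η hη)
  obtain ⟨ρ, hρ, hb⟩ := Metric.eventually_nhds_iff_ball.1 hall
  intro hlim
  have hlim' : x ∈ closure (μ.supp \ {x}) := hlim
  obtain ⟨w, ⟨hw1, hw2⟩, hwd⟩ := Metric.mem_closure_iff.1 hlim' ρ hρ
  rw [dist_comm] at hwd
  obtain ⟨h1, h2⟩ := hb w hwd
  obtain ⟨s, hs, rfl⟩ := h2 (μ.aux_supp_circle w hw1)
  rw [abs_lt] at hs
  exact μ.aux_notsupp a b s ⟨by linarith, by linarith⟩ U g hU hΓU han heq hun (h1 hw2) hw1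

end MatrixMeasure

/-- For a normalized matrix measure `μ` on the unit circle with Schur
function `f`, an open arc `Γ ⊆ 𝕋` is disjoint from the set of limit points of `supp μ`
if and only if `f` has an analytic continuation to a neighbourhood of `Γ` which takes
unitary values on `Γ`. -/
theorem statement0 {n : ℕ} (μ : MatrixMeasure n) (hnorm : μ.meas Set.univ = 1)
    (Γ : Set ℂ) (hΓ : IsOpenArc Γ) :
    Γ ∩ μ.limitPts = ∅ ↔
      ∃ (U : Set ℂ) (g : ℂ → Matrix (Fin n) (Fin n) ℂ), IsOpen U ∧ Γ ⊆ U ∧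
        (∀ i j, AnalyticOnNhd ℂ (fun z => g z i j) U) ∧
        (∀ z ∈ U, ‖z‖ < 1 → z ≠ 0 → g z = μ.schur z) ∧
        (∀ z ∈ Γ, g z ∈ Matrix.unitaryGroup (Fin n) ℂ) := by
  obtain ⟨a, b, -, -, rfl⟩ := hΓ
  constructor
  · intro h
    refine μ.aux_forward _ ?_ h
    rintro _ ⟨s, _, rfl⟩
    exact ⟨s, rfl⟩
  · rintro ⟨U, g, hU, hΓU, han, heq, hun⟩
    refine Set.eq_empty_iff_forall_notMem.2 ?_
    rintro _ ⟨⟨θ, hθ, rfl⟩, hlim⟩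
    exact μ.aux_backward a b U g hU (fun s hs => hΓU ⟨s, hs, rfl⟩) han heq
      (fun s hs => hun _ ⟨s, hs, rfl⟩) θ hθ hlim
end

section
/- Let s, s̃ ∈ (−1,1), θ = arcsin s, θ̃ = arcsin s̃, and define Δ(z) = (1−z²)² + 4z(s+s̃z)(sz+s̃) and f(z) = (z² − 1 + √Δ(z)) / (2z(s + s̃z)), with the branch of √Δ analytic near 0 normalized by √Δ(z) → 1 as z → 0. Then f defines an analytic function on the open unit disk 𝔻 with |f(z)| ≤ 1 (the apparent singularities being removable), f satisfies the fixed-point relation of the Schur algorithm f = T_s T_{s̃} f, i.e. (1/z)(f(z)−s̃)/(1−s̃ f(z)) = (z f(z) + s)/(1 + s z f(z)), and: if θ̃ + θ ≠ 0 then f extends analytically to a neighbourhood of 1, with |f| = 1 on an open arc of 𝕋 containing 1, and f(1) = |s̃+s|/(s̃+s) = sgn(θ̃+θ); if θ̃ − θ ≠ 0 then f extends analytically to a neighbourhood of −1, with |f| = 1 on an open arc of 𝕋 containing −1, and f(−1) = |s̃−s|/(s̃−s) = sgn(θ̃−θ). Conversely, if θ̃ + θ = 0 (resp. θ̃ − θ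 = 0) then f has no analytic continuation to a neighbourhood of 1 (resp. −1) unitary on an arc of 𝕋 around that point. -/
open Complex Filter Set Metric

/-- one square-root factor -/
noncomputable def sqF (u z : ℂ) : ℂ := (1 - u * z) ^ ((1 : ℂ) / 2)

lemma sqF_sq (u z : ℂ) : sqF u z ^ 2 = 1 - u * z := by
  unfold sqF
  rw [← Complex.cpow_nat_mul]
  norm_num

lemma re_pos_aux (u z : ℂ) (hu : ‖u‖ = 1) (hz : ‖z‖ ≤ 1) (h : 1 - u * z ≠ 0) :
    0 < (1 - u * z).re := by
  have h1 : ‖u * z‖ ≤ 1 := by rw [norm_mul, hu, one_mul]; exact hz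
  have h2 : (u * z).re ^ 2 + (u * z).im ^ 2 ≤ 1 := by
    have := Complex.sq_norm (u * z)
    rw [Complex.normSq_apply] at this
    nlinarith [norm_nonneg (u * z)]
  by_contra hc
  apply h
  rw [Complex.sub_re, Complex.one_re] at hc
  have h3 : (u * z).re = 1 := by nlinarith [sq_nonneg (u * z).im]
  have h4 : (u * z).im = 0 := by
    rw [h3] at h2
    nlinarith [sq_nonneg (u * z).im]
  apply Complex.ext
  · rw [Complex.sub_re, h3]; simp
  · rw [Complex.sub_im, h4]; simp

lemma sqF_analytic (u z : ℂ) (hu : ‖u‖ = 1) (hz : ‖z‖ ≤ 1) (h : 1 - u * z ≠ 0) :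
    AnalyticAt ℂ (sqF u) z := by
  unfold sqF
  have hs : 1 - u * z ∈ Complex.slitPlane := Or.inl (re_pos_aux u z hu hz h)
  have : AnalyticAt ℂ (fun z => 1 - u * z) z := by fun_prop
  exact this.cpow analyticAt_const hs

lemma sqF_conj (u : ℂ) (x : ℝ) (hu : ‖u‖ = 1) (hx : |x| ≤ 1) (h : 1 - u * x ≠ 0) :
    ∃ r : ℝ, 0 < r ∧ sqF u x * sqF (starRingEnd ℂ u) x = r := by
  have hx' : ‖(x : ℂ)‖ ≤ 1 := by simpa using hx
  have hre := re_pos_aux u x hu hx' h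
  have harg : (1 - u * x).arg ≠ Real.pi := by
    intro hc
    rw [Complex.arg_eq_pi_iff] at hc
    linarith [hc.1]
  have hcj : sqF (starRingEnd ℂ u) x = starRingEnd ℂ (sqF u x) := by
    unfold sqF
    have := Complex.cpow_conj (1 - u * x) ((1 : ℂ) / 2) harg
    have h2 : (starRingEnd ℂ) ((1 : ℂ) / 2) = 1 / 2 := by
      rw [map_div₀, map_one, map_ofNat]
    rw [h2] at this
    rw [this, Complex.conj_conj]
    simp
  refine ⟨Complex.normSq (sqF u x), ?_, ?_⟩
  · rw [Complex.normSq_pos]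
    intro hc
    have := sqF_sq u x
    rw [hc] at this
    exact h (by rw [← this]; simp)
  · rw [hcj, Complex.mul_conj]

/-- the discriminant -/
def dl (s st : ℝ) (z : ℂ) : ℂ :=
  (1 - z ^ 2) ^ 2 + 4 * z * ((s : ℂ) + (st : ℂ) * z) * ((s : ℂ) * z + (st : ℂ))

lemma exists_unit (a : ℝ) (ha : -1 ≤ a) (ha' : a ≤ 1) :
    ∃ u : ℂ, ‖u‖ = 1 ∧ u * starRingEnd ℂ u = 1 ∧ u + starRingEnd ℂ u = 2 * (a : ℂ) := by
  have h : (Real.sqrt (1 - a ^ 2)) ^ 2 = 1 - a ^ 2 := Real.sq_sqrt (by nlinarith)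
  refine ⟨⟨a, Real.sqrt (1 - a ^ 2)⟩, ?_, ?_, ?_⟩
  · have h1 := Complex.sq_norm ⟨a, Real.sqrt (1 - a ^ 2)⟩
    rw [Complex.normSq_apply] at h1
    simp only at h1
    nlinarith [norm_nonneg (⟨a, Real.sqrt (1 - a ^ 2)⟩ : ℂ)]
  · rw [Complex.mul_conj, Complex.normSq_apply]
    norm_cast
    nlinarith
  · rw [Complex.add_conj]
    push_cast
    rfl

lemma exists_sqrt (s st : ℝ) (hs : s ∈ Set.Ioo (-1 : ℝ) 1) (hst : st ∈ Set.Ioo (-1 : ℝ) 1) :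
    ∃ S : ℂ → ℂ, (∀ z, S z ^ 2 = dl s st z) ∧
      (∀ z : ℂ, ‖z‖ ≤ 1 → dl s st z ≠ 0 → AnalyticAt ℂ S z) ∧
      (∀ z : ℂ, ‖z‖ < 1 → dl s st z ≠ 0) ∧
      (∀ x : ℝ, |x| ≤ 1 → dl s st x ≠ 0 → ∃ r : ℝ, 0 < r ∧ S x = r) := by
  obtain ⟨hs1, hs2⟩ := hs
  obtain ⟨ht1, ht2⟩ := hst
  set k := Real.sqrt ((1 - s ^ 2) * (1 - st ^ 2)) with hk
  have hk0 : 0 ≤ k := Real.sqrt_nonneg _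
  have hk2 : k ^ 2 = (1 - s ^ 2) * (1 - st ^ 2) := by
    apply Real.sq_sqrt
    apply mul_nonneg <;> nlinarith
  have hp : s * st < 1 ∧ -1 < s * st := by
    constructor <;> nlinarith
  have hk3 : k ≤ 1 + s * st := by
    apply abs_le_of_sq_le_sq' _ (by linarith) |>.2
    nlinarith [sq_nonneg (s + st)]
  have hk4 : k ≤ 1 - s * st := by
    apply abs_le_of_sq_le_sq' _ (by linarith) |>.2
    nlinarith [sq_nonneg (s - st)]
  obtain ⟨u, hu, huu, hua⟩ := exists_unit (-(s * st) + k) (by linarith) (by linarith)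
  obtain ⟨v, hv, hvv, hvb⟩ := exists_unit (-(s * st) - k) (by linarith) (by linarith)
  have hu' : ‖starRingEnd ℂ u‖ = 1 := by simpa using hu
  have hv' : ‖starRingEnd ℂ v‖ = 1 := by simpa using hv
  have hfac : ∀ z, dl s st z = (1 - u * z) * (1 - starRingEnd ℂ u * z) *
      ((1 - v * z) * (1 - starRingEnd ℂ v * z)) := by
    intro z
    have hk2c : (k : ℂ) ^ 2 = (1 - (s : ℂ) ^ 2) * (1 - (st : ℂ) ^ 2) := by exact_mod_cast hk2
    have e1 : (1 - u * z) * (1 - starRingEnd ℂ u * z)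
        = 1 - 2 * (-((s : ℂ) * st) + k) * z + z ^ 2 := by
      push_cast at hua
      linear_combination (-z) * hua + z ^ 2 * huu
    have e2 : (1 - v * z) * (1 - starRingEnd ℂ v * z)
        = 1 - 2 * (-((s : ℂ) * st) - k) * z + z ^ 2 := by
      push_cast at hvb
      linear_combination (-z) * hvb + z ^ 2 * hvv
    rw [e1, e2, dl]
    linear_combination (4 * z ^ 2) * hk2c
  refine ⟨fun z => sqF u z * sqF (starRingEnd ℂ u) z * (sqF v z * sqF (starRingEnd ℂ v) z),
    ?_, ?_, ?_, ?_⟩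
  · intro z
    rw [mul_pow, mul_pow, mul_pow, sqF_sq, sqF_sq, sqF_sq, sqF_sq, hfac]
  · intro z hz hd
    rw [hfac] at hd
    simp only [mul_ne_zero_iff] at hd
    obtain ⟨⟨h1, h2⟩, h3, h4⟩ := hd
    exact ((sqF_analytic u z hu hz h1).mul (sqF_analytic _ z hu' hz h2)).mul
      ((sqF_analytic v z hv hz h3).mul (sqF_analytic _ z hv' hz h4))
  · intro z hz
    have key : ∀ w : ℂ, ‖w‖ = 1 → 1 - w * z ≠ 0 := by
      intro w hw h
      have : w * z = 1 := (sub_eq_zero.mp h).symm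
      have h2 : ‖w * z‖ = 1 := by rw [this]; simp
      rw [norm_mul, hw, one_mul] at h2
      linarith
    rw [hfac]
    exact mul_ne_zero (mul_ne_zero (key _ hu) (key _ hu')) (mul_ne_zero (key _ hv) (key _ hv'))
  · intro x hx hd
    rw [hfac] at hd
    simp only [mul_ne_zero_iff] at hd
    obtain ⟨⟨h1, h2⟩, h3, h4⟩ := hd
    obtain ⟨r1, hr1, e1⟩ := sqF_conj u x hu hx h1
    obtain ⟨r2, hr2, e2⟩ := sqF_conj v x hv hx h3
    refine ⟨r1 * r2, mul_pos hr1 hr2, ?_⟩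
    simp only [e1, e2]
    push_cast
    rfl

/-- quadratic in terms of the function -/
lemma exists_f (s st : ℝ) (hs : s ∈ Set.Ioo (-1 : ℝ) 1) (hst : st ∈ Set.Ioo (-1 : ℝ) 1) :
    ∃ f : ℂ → ℂ, AnalyticOnNhd ℂ f (Metric.ball (0 : ℂ) 1) ∧ f 0 = st ∧
      (∀ z ∈ Metric.ball (0 : ℂ) 1,
        z * (s + st * z) * f z ^ 2 + (1 - z ^ 2) * f z - (st + s * z) = 0) ∧
      (∀ e : ℝ, e ^ 2 = 1 → st + e * s ≠ 0 →
        AnalyticAt ℂ f e ∧ f e = ((|st + e * s| / (st + e * s) : ℝ) : ℂ) ∧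
        ∀ᶠ z in nhds (e : ℂ), ‖z‖ = 1 → ‖f z‖ = 1) := by
  obtain ⟨S, hS2, hSa, hd0, hSr⟩ := exists_sqrt s st hs hst
  by_cases h0 : s = 0 ∧ st = 0
  · obtain ⟨rfl, rfl⟩ := h0
    refine ⟨fun _ => 0, analyticOnNhd_const, by simp, by simp, ?_⟩
    intro e _ h
    simp at h
  have hD : ∀ z ∈ Metric.ball (0 : ℂ) 1, 1 - z ^ 2 + S z ≠ 0 := by
    intro z hz hc
    have hz1 : ‖z‖ < 1 := by simpa using hz
    have h1 : z * (s + st * z) * (s * z + st) = 0 := by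
      have := hS2 z
      rw [dl] at this
      linear_combination (1 / 4) * (S z - (1 - z ^ 2)) * hc - (1 / 4) * this
    have h2 : ∃ x : ℝ, z = x := by
      rcases mul_eq_zero.mp h1 with h | h
      · rcases mul_eq_zero.mp h with h | h
        · exact ⟨0, by simpa using h⟩
        · have ht : st ≠ 0 := by
            rintro rfl
            apply h0
            simpa using h
          refine ⟨-s / st, ?_⟩
          have : (st : ℂ) ≠ 0 := by exact_mod_cast ht
          push_cast
          field_simp
          linear_combination h
      · have ht : s ≠ 0 := by
          rintro rfl
          apply h0
          simpa using h
        refine ⟨-st / s, ?_⟩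
        have : (s : ℂ) ≠ 0 := by exact_mod_cast ht
        push_cast
        field_simp
        linear_combination h
    obtain ⟨x, rfl⟩ := h2
    have hx : |x| < 1 := by simpa using hz1
    obtain ⟨r, hr, e⟩ := hSr x hx.le (hd0 _ hz1)
    rw [e] at hc
    have hc' : 1 - x ^ 2 + r = 0 := by exact_mod_cast hc
    have : x ^ 2 < 1 := by rwa [sq_lt_one_iff_abs_lt_one]
    linarith
  have hFa : ∀ z : ℂ, AnalyticAt ℂ S z → 1 - z ^ 2 + S z ≠ 0 →
      AnalyticAt ℂ (fun z => 2 * (st + s * z) / (1 - z ^ 2 + S z)) z := by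
    intro z h1 h2
    have hn : AnalyticAt ℂ (fun z : ℂ => 2 * ((st : ℂ) + s * z)) z := by fun_prop
    have hd : AnalyticAt ℂ (fun z : ℂ => 1 - z ^ 2 + S z) z := by fun_prop
    exact hn.div hd h2
  refine ⟨fun z => 2 * (st + s * z) / (1 - z ^ 2 + S z), ?_, ?_, ?_, ?_⟩
  · intro z hz
    have hz1 : ‖z‖ < 1 := by simpa using hz
    exact hFa z (hSa z hz1.le (hd0 z hz1)) (hD z hz)
  · obtain ⟨r, hr, e⟩ := hSr 0 (by simp) (hd0 _ (by simp))
    have h1 := hS2 0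
    simp only [Complex.ofReal_zero] at e
    rw [e, dl] at h1
    have h2 : r ^ 2 = 1 := by
      have : (r : ℂ) ^ 2 = 1 := by simpa using h1
      exact_mod_cast this
    have h3 : r = 1 := by nlinarith
    rw [h3] at e
    simp only [e]
    norm_num
  · intro z hz
    have hDz := hD z hz
    have := hS2 z
    rw [dl] at this
    field_simp
    linear_combination (-1) * (st + s * z) * this
  · intro e he hne
    have heC : (e : ℂ) ^ 2 = 1 := by exact_mod_cast he
    have hab : |e| = 1 := by
      have := sq_abs e
      nlinarith [abs_nonneg e]
    have hde : dl s st e = ((4 * (st + e * s) ^ 2 : ℝ) : ℂ) := by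
      rw [dl]
      push_cast
      linear_combination ((e : ℂ) ^ 2 - 1 + 4 * s * st + 4 * st ^ 2 - 4 * s * st + 4 * s * st * e) * heC
    have hdne : dl s st e ≠ 0 := by
      rw [hde]
      norm_cast
      positivity
    have hen : ‖(e : ℂ)‖ = 1 := by simpa using hab
    obtain ⟨r, hr, hre⟩ := hSr e hab.le hdne
    have hr2 : r = 2 * |st + e * s| := by
      have h1 := hS2 e
      rw [hre, hde] at h1
      have h2 : r ^ 2 = 4 * (st + e * s) ^ 2 := by exact_mod_cast h1
      have h3 := sq_abs (st + e * s)
      have h4 := abs_nonneg (st + e * s)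
      apply (pow_left_inj₀ hr.le (by positivity) two_ne_zero).mp
      rw [h2]; nlinarith
    have hSae := hSa e hen.le hdne
    have hDe : 1 - (e : ℂ) ^ 2 + S e ≠ 0 := by
      rw [heC, hre]
      simpa using hr.ne'
    refine ⟨hFa e hSae hDe, ?_, ?_⟩
    · simp only []
      rw [heC, hre, hr2]
      have h4 : |st + e * s| ≠ 0 := abs_ne_zero.mpr hne
      have : 2 * (st + s * e) / (1 - 1 + 2 * |st + e * s|) = |st + e * s| / (st + e * s) := by
        rw [mul_comm s e]
        generalize st + e * s = t at hne h4
        have h3 := sq_abs t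
        rw [sub_self, zero_add, mul_div_mul_left _ _ two_ne_zero, div_eq_div_iff h4 hne]
        linarith
      exact_mod_cast this
    · have hc1 : ∀ᶠ z in nhds (e : ℂ), 1 - z ^ 2 + S z ≠ 0 := by
        have : ContinuousAt (fun z : ℂ => 1 - z ^ 2 + S z) e := by
          have := hSae.continuousAt
          fun_prop
        exact this.eventually_ne hDe
      have hc2 : ∀ᶠ z in nhds (e : ℂ), 0 < (dl s st z * (starRingEnd ℂ z) ^ 2).re := by
        have hcont : Continuous (fun z : ℂ => (dl s st z * (starRingEnd ℂ z) ^ 2).re) := by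
          unfold dl
          have := Complex.continuous_conj
          fun_prop
        apply hcont.continuousAt.eventually_const_lt
        simp only []
        rw [hde, Complex.conj_ofReal, heC, mul_one, Complex.ofReal_re]
        positivity
      filter_upwards [hc1, hc2] with z hz1 hz2 hz
      have hzz : z * starRingEnd ℂ z = 1 := by
        rw [Complex.mul_conj, Complex.normSq_eq_norm_sq, hz]; simp
      have hSz := hS2 z
      set zb := starRingEnd ℂ z with hzb
      have hQ : dl s st z * zb ^ 2 = (zb - z) ^ 2 + 4 * (s * zb + st) * (s * z + st) := by
        rw [dl]
        linear_combination
          ((z * zb + 1) * z ^ 2 - 2 * (z * zb) + 4 * (s * zb + st * z * zb + st) * (s * z + st)) * hzz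
      have hQc : starRingEnd ℂ (dl s st z * zb ^ 2) = dl s st z * zb ^ 2 := by
        rw [hQ]
        simp only [map_add, map_mul, map_pow, map_sub, Complex.conj_ofReal, map_ofNat, ← hzb]
        rw [hzb, Complex.conj_conj]
        ring
      have hR : starRingEnd ℂ (S z * zb) = S z * zb := by
        have h1 : (starRingEnd ℂ (S z * zb)) ^ 2 = (S z * zb) ^ 2 := by
          rw [← map_pow, mul_pow, hSz, hQc]
        rcases sq_eq_sq_iff_eq_or_eq_neg.mp h1 with h | h
        · exact h
        · exfalso
          have h2 : dl s st z * zb ^ 2 = ((-Complex.normSq (S z * zb) : ℝ) : ℂ) := by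
            push_cast
            rw [← Complex.mul_conj, h, ← hSz]
            ring
          rw [h2, Complex.ofReal_re] at hz2
          linarith [Complex.normSq_nonneg (S z * zb)]
      have hSc : starRingEnd ℂ (S z) = S z * zb ^ 2 := by
        rw [map_mul, hzb, Complex.conj_conj, ← hzb] at hR
        linear_combination zb * hR - starRingEnd ℂ (S z) * hzz
      have hN : Complex.normSq (2 * (st + s * z)) = Complex.normSq (1 - z ^ 2 + S z) := by
        have : ((Complex.normSq (2 * (st + s * z)) : ℝ) : ℂ)
            = (Complex.normSq (1 - z ^ 2 + S z) : ℝ) := by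
          rw [← Complex.mul_conj, ← Complex.mul_conj]
          simp only [map_add, map_mul, map_pow, map_sub, Complex.conj_ofReal, map_ofNat, map_one,
            hSc, ← hzb]
          rw [← hSz] at hQ
          linear_combination (-1) * hQ + ((1 - z * zb) + S z * (1 + z * zb)) * hzz
        exact_mod_cast this
      rw [norm_div, div_eq_one_iff_eq (norm_ne_zero_iff.mpr hz1)]
      rw [Complex.normSq_eq_norm_sq, Complex.normSq_eq_norm_sq] at hN
      exact (pow_left_inj₀ (norm_nonneg _) (norm_nonneg _) two_ne_zero).mp hN

lemma quad_fixed (s st z w : ℂ)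
    (h : z * (s + st * z) * w ^ 2 + (1 - z ^ 2) * w - (st + s * z) = 0) :
    (w - st) * (1 + s * z * w) = z * (z * w + s) * (1 - st * w) := by
  linear_combination h

lemma norm_mob (a : ℝ) (w : ℂ) :
    ‖1 + a * w‖ ^ 2 - ‖w + a‖ ^ 2 = (1 - a ^ 2) * (1 - ‖w‖ ^ 2) := by
  simp only [Complex.sq_norm, Complex.normSq_apply]
  simp
  ring

lemma norm_ne_one (s st : ℝ) (hs : s ∈ Set.Ioo (-1 : ℝ) 1) (hst : st ∈ Set.Ioo (-1 : ℝ) 1)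
    (z w : ℂ) (hz : ‖z‖ < 1)
    (h : (w - st) * (1 + s * z * w) = z * (z * w + s) * (1 - st * w)) : ‖w‖ ≠ 1 := by
  intro hw
  have hs' : 0 < 1 - s ^ 2 := by nlinarith [hs.1, hs.2]
  have hst' : 0 < 1 - st ^ 2 := by nlinarith [hst.1, hst.2]
  have h1 := norm_mob (-st) w
  rw [hw] at h1
  have e1 : (1 + ((-st : ℝ) : ℂ) * w) = 1 - st * w := by push_cast; ring
  have e2 : (w + ((-st : ℝ) : ℂ)) = w - st := by push_cast; ring
  rw [e1, e2] at h1
  have h2 : ‖w - st‖ = ‖1 - st * w‖ := by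
    apply (pow_left_inj₀ (norm_nonneg _) (norm_nonneg _) two_ne_zero).mp
    linarith
  have h3 := norm_mob s (z * w)
  rw [norm_mul z w, hw, mul_one, ← mul_assoc] at h3
  have h4 : ‖z * w + s‖ < ‖1 + s * z * w‖ := by
    apply lt_of_pow_lt_pow_left₀ 2 (norm_nonneg _)
    have : 0 < (1 - s ^ 2) * (1 - ‖z‖ ^ 2) := by
      apply mul_pos hs'
      nlinarith [norm_nonneg z]
    linarith
  have h5 : 0 < ‖1 - st * w‖ := by
    rw [norm_pos_iff]
    intro hc
    have : ‖(st : ℂ) * w‖ = 1 := by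
      rw [← sub_eq_zero.mp hc]; simp
    rw [norm_mul, hw, mul_one, Complex.norm_real, Real.norm_eq_abs] at this
    have h6 := sq_abs st
    rw [this] at h6
    linarith
  have h7 := congrArg norm h
  rw [norm_mul, norm_mul, norm_mul, h2, mul_comm] at h7
  have h8 := mul_right_cancel₀ h5.ne' h7
  have h9 : ‖z‖ * ‖z * w + s‖ ≤ ‖z * w + s‖ := by
    nlinarith [norm_nonneg (z * w + s)]
  linarith

lemma bounded_f (s st : ℝ) (hs : s ∈ Set.Ioo (-1 : ℝ) 1) (hst : st ∈ Set.Ioo (-1 : ℝ) 1)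
    (f : ℂ → ℂ) (hf : AnalyticOnNhd ℂ f (Metric.ball (0 : ℂ) 1)) (hf0 : f 0 = st)
    (hq : ∀ z ∈ Metric.ball (0 : ℂ) 1,
        z * (s + st * z) * f z ^ 2 + (1 - z ^ 2) * f z - (st + s * z) = 0) :
    ∀ z ∈ Metric.ball (0 : ℂ) 1, ‖f z‖ ≤ 1 := by
  intro z hz
  by_contra hc
  push Not at hc
  have hconn : IsPreconnected (Metric.ball (0 : ℂ) 1) := (convex_ball 0 1).isPreconnected
  have hcont : ContinuousOn (fun z => ‖f z‖) (Metric.ball (0 : ℂ) 1) := hf.continuousOn.norm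
  have h0 : (0 : ℂ) ∈ Metric.ball (0 : ℂ) 1 := by simp
  have h1 : ‖f 0‖ ≤ 1 := by
    rw [hf0, Complex.norm_real, Real.norm_eq_abs, abs_le]
    exact ⟨hst.1.le, hst.2.le⟩
  obtain ⟨w, hw, hw1⟩ := hconn.intermediate_value h0 hz hcont ⟨h1, hc.le⟩
  exact norm_ne_one s st hs hst w (f w) (by simpa using hw) (quad_fixed _ _ _ _ (hq w hw)) hw1

lemma neg_part (s st : ℝ) (hs : s ∈ Set.Ioo (-1 : ℝ) 1) (f : ℂ → ℂ)
    (hq : ∀ z ∈ Metric.ball (0 : ℂ) 1,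
        z * (s + st * z) * f z ^ 2 + (1 - z ^ 2) * f z - (st + s * z) = 0)
    (e : ℝ) (he : e ^ 2 = 1) (h : st + e * s = 0) (V : Set ℂ) (g : ℂ → ℂ) (hV : IsOpen V)
    (heV : (e : ℂ) ∈ V) (hg : AnalyticOnNhd ℂ g V)
    (hgf : ∀ z ∈ V ∩ Metric.ball (0 : ℂ) 1, g z = f z) : ‖g e‖ ≠ 1 := by
  intro hn
  have heC : (e : ℂ) ^ 2 = 1 := by exact_mod_cast he
  have hstC : (st : ℂ) = -(e * s) := by
    have : st = -(e * s) := by linarith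
    rw [this]; push_cast; ring
  have hab : |e| = 1 := by
    have := sq_abs e
    nlinarith [abs_nonneg e]
  have hcl : (e : ℂ) ∈ closure (Metric.ball (0 : ℂ) 1) := by
    rw [closure_ball _ one_ne_zero]
    simp [hab]
  have hne : (nhdsWithin (e : ℂ) (Metric.ball (0 : ℂ) 1)).NeBot :=
    mem_closure_iff_nhdsWithin_neBot.mp hcl
  have hgc : ContinuousAt g e := (hg e heV).continuousAt
  have hc : ContinuousAt (fun z : ℂ => s * z * g z ^ 2 + (1 + e * z) * g z + s * e) e := by
    fun_prop
  have ht := hc.tendsto.mono_left (nhdsWithin_le_nhds (s := Metric.ball (0 : ℂ) 1))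
  have hev : (fun z : ℂ => s * z * g z ^ 2 + (1 + e * z) * g z + s * e)
      =ᶠ[nhdsWithin (e : ℂ) (Metric.ball (0 : ℂ) 1)] fun _ => 0 := by
    filter_upwards [self_mem_nhdsWithin, mem_nhdsWithin_of_mem_nhds (hV.mem_nhds heV)] with z hz hzV
    have h1 := hq z hz
    rw [← hgf z ⟨hzV, hz⟩, hstC] at h1
    have h2 : (1 - e * z : ℂ) ≠ 0 := by
      intro hc
      have h3 : ‖(e : ℂ) * z‖ = 1 := by rw [← sub_eq_zero.mp hc]; simp
      rw [norm_mul, Complex.norm_real, Real.norm_eq_abs, hab, one_mul] at h3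
      have : ‖z‖ < 1 := by simpa using hz
      linarith
    apply (mul_eq_zero.mp _).resolve_left h2
    linear_combination h1 - (z ^ 2 * g z + s * z) * heC
  have hlim := tendsto_nhds_unique (ht.congr' hev) tendsto_const_nhds
  have h5 : 2 * g e = -(s * e * (g e ^ 2 + 1)) := by
    linear_combination hlim - g e * heC
  have h6 := congrArg norm h5
  rw [norm_neg, norm_mul, norm_mul, norm_mul, hn, Complex.norm_real, Complex.norm_real,
    Real.norm_eq_abs, Real.norm_eq_abs, hab] at h6
  have h7 : ‖g e ^ 2 + 1‖ ≤ 2 := by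
    refine (norm_add_le _ _).trans ?_
    rw [norm_pow, hn]; norm_num
  have h8 : |s| < 1 := abs_lt.mpr hs
  norm_num at h6
  nlinarith [abs_nonneg s, norm_nonneg (g e ^ 2 + 1)]

lemma pos_part (f : ℂ → ℂ) (e t : ℝ) (het : Complex.exp (t * Complex.I) = e)
    (hf : AnalyticAt ℂ f e) (hn : ∀ᶠ z in nhds (e : ℂ), ‖z‖ = 1 → ‖f z‖ = 1) :
    ∃ V : Set ℂ, IsOpen V ∧ (e : ℂ) ∈ V ∧ AnalyticOnNhd ℂ f V ∧
      (∃ Γ : Set ℂ, IsOpenArc Γ ∧ (e : ℂ) ∈ Γ ∧ Γ ⊆ V ∧ ∀ z ∈ Γ, ‖f z‖ = 1) := by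
  refine ⟨{z | AnalyticAt ℂ f z}, isOpen_analyticAt ℂ f, hf, fun z hz => hz, ?_⟩
  have hc : ContinuousAt (fun x : ℝ => Complex.exp (x * Complex.I)) t := by fun_prop
  have hc' : Tendsto (fun x : ℝ => Complex.exp (x * Complex.I)) (nhds t) (nhds (e : ℂ)) := by
    rw [← het]; exact hc
  have hev := hc'.eventually (hn.and hf.eventually_analyticAt)
  obtain ⟨ε, hε, hball⟩ := Metric.eventually_nhds_iff.mp hev
  have hm : 0 < min ε 1 := lt_min hε one_pos
  have key : ∀ x ∈ Set.Ioo (t - min ε 1) (t + min ε 1), dist x t < ε := by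
    intro x hx
    rw [Real.dist_eq, abs_lt]
    have := min_le_left ε 1
    constructor <;> linarith [hx.1, hx.2]
  refine ⟨_, ⟨t - min ε 1, t + min ε 1, by linarith, ?_, rfl⟩, ⟨t, ⟨by linarith, by linarith⟩, het⟩,
    ?_, ?_⟩
  · have := min_le_right ε 1
    linarith [Real.pi_gt_three]
  · rintro _ ⟨x, hx, rfl⟩
    exact (hball (key x hx)).2
  · rintro _ ⟨x, hx, rfl⟩
    exact (hball (key x hx)).1 (Complex.norm_exp_ofReal_mul_I x)

lemma sign_arcsin (s st : ℝ) (hs : s ∈ Set.Ioo (-1 : ℝ) 1) (hst : st ∈ Set.Ioo (-1 : ℝ) 1) :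
    Real.sign (Real.arcsin st + Real.arcsin s) = |st + s| / (st + s) := by
  have hm := Real.strictMonoOn_arcsin
  have m1 : st ∈ Set.Icc (-1 : ℝ) 1 := ⟨hst.1.le, hst.2.le⟩
  have m2 : -s ∈ Set.Icc (-1 : ℝ) 1 := ⟨by linarith [hs.2], by linarith [hs.1]⟩
  rcases lt_trichotomy (st + s) 0 with h | h | h
  · have := hm m1 m2 (by linarith)
    rw [Real.arcsin_neg] at this
    rw [Real.sign_of_neg (by linarith), abs_of_neg h, neg_div, div_self h.ne]
  · have : st = -s := by linarith
    rw [h, this, Real.arcsin_neg]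
    simp
  · have := hm m2 m1 (by linarith)
    rw [Real.arcsin_neg] at this
    rw [Real.sign_of_pos (by linarith), abs_of_pos h, div_self h.ne']

lemma arcsin_add_eq_zero (s st : ℝ) (hs : s ∈ Set.Ioo (-1 : ℝ) 1)
    (hst : st ∈ Set.Ioo (-1 : ℝ) 1) : Real.arcsin st + Real.arcsin s = 0 ↔ st + s = 0 := by
  have m1 : st ∈ Set.Icc (-1 : ℝ) 1 := ⟨hst.1.le, hst.2.le⟩
  have m2 : -s ∈ Set.Icc (-1 : ℝ) 1 := ⟨by linarith [hs.2], by linarith [hs.1]⟩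
  constructor
  · intro h
    have := Real.strictMonoOn_arcsin.injOn m1 m2 (by rw [Real.arcsin_neg]; linarith)
    linarith
  · intro h
    have : st = -s := by linarith
    rw [this, Real.arcsin_neg]; ring

/-- For `s, s̃ ∈ (-1,1)`, `θ = arcsin s`, `θ̃ = arcsin s̃`, the Schur
function with 2-periodic Schur parameters `(s̃, s, s̃, s, …)`, given by
`f(z) = (z² - 1 + √Δ(z)) / (2z(s + s̃z))` with `Δ(z) = (1-z²)² + 4z(s+s̃z)(sz+s̃)` and
the branch of `√Δ` analytic near `0` with `√Δ(0) = 1`, is analytic and bounded by `1` on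
the unit disk, satisfies the fixed-point relation `f = T_s T_{s̃} f` of the Schur
algorithm (in cross-multiplied form), and: if `θ̃ + θ ≠ 0` then `f` extends analytically
to a neighbourhood of `1`, unimodularly on an arc of `𝕋` around `1`, with
`f(1) = |s̃+s|/(s̃+s) = sgn(θ̃+θ)`; if `θ̃ - θ ≠ 0` similarly at `-1` with
`f(-1) = |s̃-s|/(s̃-s) = sgn(θ̃-θ)`; and conversely if `θ̃ + θ = 0` (resp. `θ̃ - θ = 0`)
no such unitary analytic continuation around `1` (resp. `-1`) exists. -/
theorem statement16 (s st : ℝ) (hs : s ∈ Set.Ioo (-1 : ℝ) 1) (hst : st ∈ Set.Ioo (-1 : ℝ) 1)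
    (θ θt : ℝ) (hθ : θ = Real.arcsin s) (hθt : θt = Real.arcsin st)
    (Δ : ℂ → ℂ)
    (hΔ : ∀ z : ℂ,
      Δ z = (1 - z ^ 2) ^ 2 + 4 * z * ((s : ℂ) + (st : ℂ) * z) * ((s : ℂ) * z + (st : ℂ))) :
    ∃ f : ℂ → ℂ,
      AnalyticOnNhd ℂ f (Metric.ball (0 : ℂ) 1) ∧
      (∀ z ∈ Metric.ball (0 : ℂ) 1, ‖f z‖ ≤ 1) ∧
      (∃ (U : Set ℂ) (sq : ℂ → ℂ), IsOpen U ∧ (0 : ℂ) ∈ U ∧ AnalyticOnNhd ℂ sq U ∧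
        sq 0 = 1 ∧ (∀ z ∈ U, sq z ^ 2 = Δ z) ∧
        (∀ z ∈ U, 2 * z * ((s : ℂ) + (st : ℂ) * z) * f z = z ^ 2 - 1 + sq z)) ∧
      (∀ z ∈ Metric.ball (0 : ℂ) 1,
        (f z - (st : ℂ)) * (1 + (s : ℂ) * z * f z) =
          z * (z * f z + (s : ℂ)) * (1 - (st : ℂ) * f z)) ∧
      ((θt + θ ≠ 0 →
        ∃ (V : Set ℂ) (g : ℂ → ℂ), IsOpen V ∧ (1 : ℂ) ∈ V ∧ AnalyticOnNhd ℂ g V ∧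
          (∀ z ∈ V ∩ Metric.ball (0 : ℂ) 1, g z = f z) ∧
          (∃ Γ : Set ℂ, IsOpenArc Γ ∧ (1 : ℂ) ∈ Γ ∧ Γ ⊆ V ∧ ∀ z ∈ Γ, ‖g z‖ = 1) ∧
          g 1 = ((|st + s| / (st + s) : ℝ) : ℂ) ∧
          g 1 = ((Real.sign (θt + θ) : ℝ) : ℂ)) ∧
       (θt + θ = 0 →
        ¬ ∃ (V : Set ℂ) (g : ℂ → ℂ), IsOpen V ∧ (1 : ℂ) ∈ V ∧ AnalyticOnNhd ℂ g V ∧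
          (∀ z ∈ V ∩ Metric.ball (0 : ℂ) 1, g z = f z) ∧
          (∃ Γ : Set ℂ, IsOpenArc Γ ∧ (1 : ℂ) ∈ Γ ∧ Γ ⊆ V ∧ ∀ z ∈ Γ, ‖g z‖ = 1))) ∧
      ((θt - θ ≠ 0 →
        ∃ (V : Set ℂ) (g : ℂ → ℂ), IsOpen V ∧ (-1 : ℂ) ∈ V ∧ AnalyticOnNhd ℂ g V ∧
          (∀ z ∈ V ∩ Metric.ball (0 : ℂ) 1, g z = f z) ∧
          (∃ Γ : Set ℂ, IsOpenArc Γ ∧ (-1 : ℂ) ∈ Γ ∧ Γ ⊆ V ∧ ∀ z ∈ Γ, ‖g z‖ = 1) ∧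
          g (-1) = ((|st - s| / (st - s) : ℝ) : ℂ) ∧
          g (-1) = ((Real.sign (θt - θ) : ℝ) : ℂ)) ∧
       (θt - θ = 0 →
        ¬ ∃ (V : Set ℂ) (g : ℂ → ℂ), IsOpen V ∧ (-1 : ℂ) ∈ V ∧ AnalyticOnNhd ℂ g V ∧
          (∀ z ∈ V ∩ Metric.ball (0 : ℂ) 1, g z = f z) ∧
          (∃ Γ : Set ℂ, IsOpenArc Γ ∧ (-1 : ℂ) ∈ Γ ∧ Γ ⊆ V ∧ ∀ z ∈ Γ, ‖g z‖ = 1))) := by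
  obtain ⟨f, hfa, hf0, hq, hpos⟩ := exists_f s st hs hst
  subst hθ hθt
  have hms : -s ∈ Set.Ioo (-1 : ℝ) 1 := ⟨by linarith [hs.2], by linarith [hs.1]⟩
  have hsub : Real.arcsin st - Real.arcsin s = Real.arcsin st + Real.arcsin (-s) := by
    rw [Real.arcsin_neg]; ring
  refine ⟨f, hfa, bounded_f s st hs hst f hfa hf0 hq, ?_, ?_, ⟨?_, ?_⟩, ⟨?_, ?_⟩⟩
  · refine ⟨Metric.ball 0 1, fun z => 1 - z ^ 2 + 2 * z * ((s : ℂ) + (st : ℂ) * z) * f z,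
      Metric.isOpen_ball, by simp, ?_, by simp, ?_, ?_⟩
    · intro z hz
      have := hfa z hz
      fun_prop
    · intro z hz
      rw [hΔ]
      linear_combination (4 * z * ((s : ℂ) + (st : ℂ) * z)) * hq z hz
    · intro z hz
      ring
  · intro z hz
    exact quad_fixed _ _ _ _ (hq z hz)
  · intro h
    have hne : st + 1 * s ≠ 0 := by
      rw [one_mul]; exact fun h' => h ((arcsin_add_eq_zero s st hs hst).mpr h')
    obtain ⟨h1, h2, h3⟩ := hpos 1 (by norm_num) hne
    obtain ⟨V, hV, heV, hfV, hΓ⟩ := pos_part f 1 0 (by simp) h1 h3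
    rw [one_mul] at h2
    simp only [Complex.ofReal_one] at heV hΓ h2
    refine ⟨V, f, hV, heV, hfV, fun _ _ => rfl, hΓ, h2, ?_⟩
    rw [h2, sign_arcsin s st hs hst]
  · rintro h ⟨V, g, hV, heV, hg, hgf, Γ, -, heΓ, -, hn⟩
    have h0 : st + 1 * s = 0 := by
      rw [one_mul]; exact (arcsin_add_eq_zero s st hs hst).mp h
    refine neg_part s st hs f hq 1 (by norm_num) h0 V g hV (by simpa using heV) hg hgf ?_
    simpa using hn 1 heΓ
  · intro h
    have hne : st + (-1) * s ≠ 0 := by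
      rw [neg_one_mul]
      exact fun h' => h (hsub.trans ((arcsin_add_eq_zero (-s) st hms hst).mpr h'))
    obtain ⟨h1, h2, h3⟩ := hpos (-1) (by norm_num) hne
    obtain ⟨V, hV, heV, hfV, hΓ⟩ := pos_part f (-1) Real.pi (by simp) h1 h3
    rw [neg_one_mul, ← sub_eq_add_neg] at h2
    simp only [Complex.ofReal_neg, Complex.ofReal_one] at heV hΓ h2
    refine ⟨V, f, hV, heV, hfV, fun _ _ => rfl, hΓ, h2, ?_⟩
    rw [h2, hsub, sign_arcsin (-s) st hms hst, ← sub_eq_add_neg]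
  · rintro h ⟨V, g, hV, heV, hg, hgf, Γ, -, heΓ, -, hn⟩
    have h0 : st + (-1) * s = 0 := by
      rw [neg_one_mul]; exact (arcsin_add_eq_zero (-s) st hms hst).mp (hsub.symm.trans h)
    refine neg_part s st hs f hq (-1) (by norm_num) h0 V g hV (by simpa using heV) hg hgf ?_
    simpa using hn (-1) heΓ
end
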